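/- arXiv:1501.02430 — 3 statements merged into one kernel-verified Lean document; each statement's English description precedes it below -/
import Mathlib

section
/- Fix a (k+1)-cycle σ in S_n and a partition λ = (1^{α₁} 2^{α₂} ...) of n. For a partition ν = (1^{γ₁} 2^{γ₂} ...) with length ℓ(ν) = k+1 and γᵢ ≤ αᵢ for all i, the number of permutations τ of cycle type λ such that the k+1 points moved by σ lie in distinct cycles of τ, with exactly γᵢ of these points lying in cycles of length i, equals (k+1)! · (n−k−1)! / ∏ᵢ ( i^{αᵢ−γᵢ} · γᵢ! · (αᵢ−γᵢ)! ). -/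
noncomputable def fullCycleType {n : ℕ} (σ : Equiv.Perm (Fin n)) : Multiset ℕ :=
  σ.cycleType + Multiset.replicate (n - σ.support.card) 1

/-- The length of the cycle of `τ` containing `a` (fixed points give length 1). -/
noncomputable def cycLen {n : ℕ} (τ : Equiv.Perm (Fin n)) (a : Fin n) : ℕ :=
  if τ a = a then 1 else (τ.cycleOf a).support.card

/-! Conjugation shows that the number `N` of admissible `τ` is the same for every set of `ℓ(ν)`
points, so counting the pairs (set, permutation) in two ways gives `choose n ℓ(ν) * N = M * T`.
Here `M = n! / ∏ (i ^ αᵢ * αᵢ!)` is the number of `τ` of cycle type `λ`, and `T` is the number of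
admissible sets for one such `τ`: choosing the `γᵢ` cycles of length `i` that are met, and one point
in each of them, gives `T = ∏ (choose αᵢ γᵢ * i ^ γᵢ)`.

Sets of points are counted through the multiset of their cycles: it equals the underlying multiset
of a finset `t` of cycles, which has no duplicates, exactly when the points lie in distinct cycles
and these cycles form `t`. -/

open Finset Equiv Equiv.Perm
open scoped Nat

theorem count_powerset_eq_prod_choose {β : Type*} [DecidableEq β] (s : Multiset β)
    {t : Multiset β} {I : Finset β} (hI : t.toFinset ⊆ I) :
    s.powerset.count t = ∏ b ∈ I, (s.count b).choose (t.count b) := by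
  induction s using Multiset.induction_on generalizing t with
  | empty =>
    obtain rfl | ⟨b, hb⟩ := t.empty_or_exists_mem
    · simp
    · rw [prod_eq_zero (hI (Multiset.mem_toFinset.2 hb))
        (Nat.choose_eq_zero_of_lt (by simpa using Multiset.count_pos.2 hb))]
      have : t ≠ 0 := by rintro rfl; simp at hb
      simpa [Multiset.count_eq_zero] using this
  | cons a s ih =>
    rw [Multiset.powerset_cons, Multiset.count_add, ih hI]
    by_cases ha : a ∈ t
    · obtain ⟨u, rfl⟩ := Multiset.exists_cons_of_mem ha
      have hu : u.toFinset ⊆ I := (Multiset.toFinset_subset.2 (Multiset.subset_cons u a)).trans hI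
      have hsplit (v w : Multiset β) (hv : ∀ b ≠ a, v.count b = s.count b)
          (hw : ∀ b ≠ a, w.count b = u.count b) :
          ∏ b ∈ I, (v.count b).choose (w.count b) = (v.count a).choose (w.count a) *
            ∏ b ∈ I.erase a, (s.count b).choose (u.count b) := by
        rw [← mul_prod_erase _ _ (hI (Multiset.mem_toFinset.2 ha))]
        exact congrArg _ (prod_congr rfl fun b hb ↦ by
          rw [hv b (ne_of_mem_erase hb), hw b (ne_of_mem_erase hb)])
      have hcons (v : Multiset β) : ∀ b ≠ a, (a ::ₘ v).count b = v.count b :=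
        fun b hb ↦ Multiset.count_cons_of_ne hb v
      rw [Multiset.count_map_eq_count' _ _ fun _ _ ↦ (Multiset.cons_inj_right a).1, ih hu,
        hsplit _ _ (fun _ _ ↦ rfl) (hcons u), hsplit s u (fun _ _ ↦ rfl) (fun _ _ ↦ rfl),
        hsplit _ _ (hcons s) (hcons u), ← add_mul, Multiset.count_cons_self,
        Multiset.count_cons_self, Nat.choose_succ_succ', add_comm (Nat.choose _ _)]
    · have hmap : (s.powerset.map (Multiset.cons a)).count t = 0 := by
        rw [Multiset.count_eq_zero, Multiset.mem_map]
        rintro ⟨u, -, rfl⟩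
        exact ha (Multiset.mem_cons_self a u)
      rw [hmap, add_zero]
      refine prod_congr rfl fun b _ ↦ ?_
      obtain rfl | hb := eq_or_ne b a
      · simp [Multiset.count_eq_zero.2 ha]
      · rw [Multiset.count_cons_of_ne hb]

theorem multiset_powerset_map {α β : Type*} (f : α → β) (s : Multiset α) :
    (s.map f).powerset = s.powerset.map (Multiset.map f) := by
  induction s using Multiset.induction_on with
  | empty => simp
  | cons a s ih => simp [Multiset.powerset_cons, ih]

theorem map_val_val_powerset {α : Type*} (s : Finset α) :
    s.powerset.val.map Finset.val = s.val.powerset := by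
  simp [Finset.powerset, Multiset.map_pmap, Multiset.pmap_eq_map]

theorem map_val_eq_val_iff_injOn_and_image_eq {α β : Type*} [DecidableEq β]
    {s : Finset α} {f : α → β} {t : Finset β} :
    s.val.map f = t.val ↔ Set.InjOn f s ∧ s.image f = t := by
  constructor
  · intro h
    have hinj : Set.InjOn f s := fun a ha b hb ↦
      Multiset.inj_on_of_nodup_map (h ▸ t.nodup) a ha b hb
    exact ⟨hinj, val_injective (by rw [image_val_of_injOn hinj, h])⟩
  · rintro ⟨hinj, rfl⟩
    exact (image_val_of_injOn hinj).symm

section Fiber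

variable {α β : Type*} [DecidableEq β] (s : Finset α) (f : α → β)

theorem card_filter_powerset_map_val_eq {t : Multiset β} {I : Finset β} (hI : t.toFinset ⊆ I) :
    #{u ∈ s.powerset | u.val.map f = t} =
      ∏ b ∈ I, ((s.val.map f).count b).choose (t.count b) := by
  rw [← count_powerset_eq_prod_choose _ hI, multiset_powerset_map, ← map_val_val_powerset,
    Multiset.map_map, Multiset.count_map]
  simp only [eq_comm, card_def, filter_val, Function.comp_apply]

theorem card_filter_powerset_map_val_eq_val (t : Finset β) :
    #{u ∈ s.powerset | u.val.map f = t.val} = ∏ b ∈ t, #{a ∈ s | f a = b} := by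
  rw [card_filter_powerset_map_val_eq s f t.val_toFinset.subset]
  refine prod_congr rfl fun b hb ↦ ?_
  rw [Multiset.count_eq_one_of_mem t.nodup hb, Nat.choose_one_right, Multiset.count_map]
  simp only [eq_comm, card_def, filter_val]

end Fiber

/-- `u` meets every part of the finite partition `P` in at most one point, and `ν` is the multiset
of the sizes of the parts that it meets. It is meant for `u ⊆ s`: all points outside `s` share the
junk part `∅`. -/
structure IsPartialTransversal {α : Type*} [DecidableEq α] {s : Finset α} (P : Finpartition s)
    (ν : Multiset ℕ) (u : Finset α) : Prop where
  injOn : Set.InjOn P.part u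
  map_card_part : u.val.map (fun a ↦ #(P.part a)) = ν

section PartialTransversal

variable {α : Type*} [DecidableEq α] {s : Finset α} {ν : Multiset ℕ}

theorem IsPartialTransversal.card_eq {P : Finpartition s} {u : Finset α}
    (h : IsPartialTransversal P ν u) : #u = ν.card := by
  rw [← h.map_card_part, Multiset.card_map, card_def]

theorem isPartialTransversal_and_image_part_eq_iff {P : Finpartition s} {u : Finset α}
    {t : Finset (Finset α)} :
    IsPartialTransversal P ν u ∧ u.image P.part = t ↔
      u.val.map P.part = t.val ∧ t.val.map card = ν := by
  have hmap (h : u.val.map P.part = t.val) : t.val.map card = u.val.map (fun a ↦ #(P.part a)) := by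
    rw [← h, Multiset.map_map, Function.comp_def]
  constructor
  · rintro ⟨⟨hinj, hν⟩, himage⟩
    have h := map_val_eq_val_iff_injOn_and_image_eq.2 ⟨hinj, himage⟩
    exact ⟨h, (hmap h).trans hν⟩
  · rintro ⟨h, hν⟩
    obtain ⟨hinj, himage⟩ := map_val_eq_val_iff_injOn_and_image_eq.1 h
    exact ⟨⟨hinj, (hmap h).symm.trans hν⟩, himage⟩

theorem card_filter_powerset_map_part_eq_val (P : Finpartition s) {t : Finset (Finset α)}
    (ht : t ⊆ P.parts) : #{u ∈ s.powerset | u.val.map P.part = t.val} = (t.val.map card).prod := by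
  rw [card_filter_powerset_map_val_eq_val, prod_map_val]
  refine prod_congr rfl fun c hc ↦ congrArg card ?_
  ext a
  grind [P.part_eq_iff_mem (ht hc), P.le (ht hc)]

open scoped Classical in
theorem card_isPartialTransversal (P : Finpartition s) {I : Finset ℕ} (hI : ν.toFinset ⊆ I) :
    #{u ∈ s.powerset | IsPartialTransversal P ν u} =
      ν.prod * ∏ i ∈ I, ((P.parts.val.map card).count i).choose (ν.count i) := by
  have hmaps : ∀ u ∈ {u ∈ s.powerset | IsPartialTransversal P ν u},
      u.image P.part ∈ {t ∈ P.parts.powerset | t.val.map card = ν} := by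
    intro u hu
    obtain ⟨hus, hu⟩ := by simpa using hu
    have hparts : u.image P.part ⊆ P.parts :=
      image_subset_iff.2 fun a ha ↦ P.part_mem.2 (hus ha)
    simpa [hparts] using (isPartialTransversal_and_image_part_eq_iff.1 ⟨hu, rfl⟩).2
  have hfiber : ∀ t ∈ {t ∈ P.parts.powerset | t.val.map card = ν},
      #{u ∈ {u ∈ s.powerset | IsPartialTransversal P ν u} | u.image P.part = t} = ν.prod := by
    intro t ht
    obtain ⟨htP, rfl⟩ := by simpa using ht
    simpa only [filter_filter, isPartialTransversal_and_image_part_eq_iff, and_true] using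
      card_filter_powerset_map_part_eq_val P htP
  rw [card_eq_sum_card_fiberwise hmaps, sum_congr rfl hfiber, sum_const,
    card_filter_powerset_map_val_eq _ _ hI, smul_eq_mul, mul_comm]

end PartialTransversal

theorem parts_eq_filter_two_le_add_replicate {n : ℕ} (p : n.Partition) :
    p.parts = p.parts.filter (2 ≤ ·) + Multiset.replicate (p.parts.count 1) 1 := by
  have hone : p.parts.filter (¬ 2 ≤ ·) = p.parts.filter (· = 1) :=
    Multiset.filter_congr fun i hi ↦ by have := p.parts_pos hi; omega
  rw [← Multiset.filter_eq', ← hone, Multiset.filter_add_not]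

theorem sum_filter_two_le_add_count_one {n : ℕ} (p : n.Partition) :
    (p.parts.filter (2 ≤ ·)).sum + p.parts.count 1 = n := by
  simpa [p.parts_sum] using
    (congrArg Multiset.sum (parts_eq_filter_two_le_add_replicate p)).symm

theorem prod_factorial_count_eq_mul {n : ℕ} (p : n.Partition) :
    ∏ i ∈ p.parts.toFinset, (p.parts.count i)! = (p.parts.count 1)! *
      ∏ i ∈ (p.parts.filter (2 ≤ ·)).toFinset, ((p.parts.filter (2 ≤ ·)).count i)! := by
  have hsub : p.parts.toFinset ⊆ insert 1 (p.parts.filter (2 ≤ ·)).toFinset := by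
    intro i hi
    rw [Multiset.mem_toFinset] at hi
    rw [mem_insert, Multiset.mem_toFinset, Multiset.mem_filter]
    exact (Nat.succ_le_of_lt (p.parts_pos hi)).eq_or_lt.imp Eq.symm fun h ↦ ⟨hi, h⟩
  rw [prod_subset hsub fun i _ hi ↦ by
      rw [Multiset.count_eq_zero.2 (by simpa using hi), Nat.factorial_zero],
    prod_insert (by simp)]
  refine congrArg _ (prod_congr rfl fun i hi ↦ ?_)
  rw [Multiset.count_filter_of_pos (Multiset.mem_filter.1 (Multiset.mem_toFinset.1 hi)).2]

theorem prod_mul_prod_choose_mul_prod {ν lam : Multiset ℕ} (hν : ν ≤ lam) :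
    (ν.prod * ∏ i ∈ lam.toFinset, (lam.count i).choose (ν.count i)) *
      ∏ i ∈ lam.toFinset,
        (i ^ (lam.count i - ν.count i) * (ν.count i)! * (lam.count i - ν.count i)!) =
      lam.prod * ∏ i ∈ lam.toFinset, (lam.count i)! := by
  rw [prod_multiset_count_of_subset ν _ (Multiset.toFinset_subset.2 (Multiset.subset_of_le hν)),
    prod_multiset_count lam]
  simp only [← prod_mul_distrib]
  refine prod_congr rfl fun i _ ↦ ?_
  have hle : ν.count i ≤ lam.count i := Multiset.count_le_of_le i hν
  rw [← Nat.choose_mul_factorial_mul_factorial hle, ← pow_sub_mul_pow i hle]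
  ring

theorem exists_perm_map_eq_of_card_eq {α : Type*} {s t : Finset α} (h : #s = #t) :
    ∃ g : Perm α, s.map g.toEmbedding = t := by
  classical
  have := Set.powersetCard.isPretransitive (α := α) (n := #s)
  obtain ⟨g, hg⟩ := MulAction.exists_smul_eq (Perm α)
    (⟨s, rfl⟩ : Set.powersetCard α #s) ⟨t, h.symm⟩
  exact ⟨g, by rw [map_eq_image]; exact congrArg Subtype.val hg⟩

section Perm

variable {α : Type*} [Fintype α] [DecidableEq α]

instance decidableRelSameCycleSetoid (τ : Perm α) : DecidableRel (SameCycle.setoid τ) :=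
  inferInstanceAs (DecidableRel τ.SameCycle)

/-- The partition of the points permuted by `τ` into the cycles of `τ`, fixed points forming
singletons. -/
def cyclePartition (τ : Perm α) : Finpartition (univ : Finset α) :=
  Finpartition.ofSetoid (SameCycle.setoid τ)

theorem mem_part_cyclePartition {τ : Perm α} {a b : α} :
    b ∈ (cyclePartition τ).part a ↔ τ.SameCycle a b :=
  Finpartition.mem_part_ofSetoid_iff_rel

theorem part_cyclePartition_eq_iff {τ : Perm α} {a b : α} :
    (cyclePartition τ).part a = (cyclePartition τ).part b ↔ τ.SameCycle a b := by
  rw [← mem_part_cyclePartition,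
    Finpartition.mem_part_iff_part_eq_part _ (mem_univ b) (mem_univ a), eq_comm]

theorem part_cyclePartition_of_apply_eq {τ : Perm α} {a : α} (ha : τ a = a) :
    (cyclePartition τ).part a = {a} := by
  ext b
  rw [mem_part_cyclePartition, mem_singleton]
  exact ⟨fun h ↦ (h.eq_of_left ha).symm, fun h ↦ h ▸ SameCycle.refl τ _⟩

theorem part_cyclePartition_of_apply_ne {τ : Perm α} {a : α} (ha : τ a ≠ a) :
    (cyclePartition τ).part a = (τ.cycleOf a).support := by
  ext b
  rw [mem_part_cyclePartition, mem_support_cycleOf_iff' ha]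

theorem injOn_support_cycleFactorsFinset (τ : Perm α) :
    Set.InjOn support (τ.cycleFactorsFinset : Set (Perm α)) := by
  intro c hc d hd h
  obtain ⟨a, ha⟩ := (mem_cycleFactorsFinset_iff.1 hc).1.nonempty_support
  rw [cycle_is_cycleOf ha hc, cycle_is_cycleOf (h ▸ ha) hd]

theorem parts_cyclePartition (τ : Perm α) :
    (cyclePartition τ).parts =
      τ.cycleFactorsFinset.image support ∪ τ.supportᶜ.image ({·}) := by
  ext c
  rw [mem_union, mem_image, mem_image]
  constructor
  · intro hc
    obtain ⟨a, ha⟩ := (cyclePartition τ).nonempty_of_mem_parts hc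
    obtain rfl := (cyclePartition τ).part_eq_of_mem hc ha
    by_cases hτ : τ a = a
    · exact .inr ⟨a, by simpa using hτ, (part_cyclePartition_of_apply_eq hτ).symm⟩
    · exact .inl ⟨τ.cycleOf a, cycleOf_mem_cycleFactorsFinset_iff.2 (mem_support.2 hτ),
        (part_cyclePartition_of_apply_ne hτ).symm⟩
  · rintro (⟨c, hc, rfl⟩ | ⟨a, ha, rfl⟩)
    · obtain ⟨a, ha⟩ := (mem_cycleFactorsFinset_iff.1 hc).1.nonempty_support
      have hτ : τ a ≠ a := mem_support.1 (mem_cycleFactorsFinset_support_le hc ha)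
      rw [cycle_is_cycleOf ha hc, ← part_cyclePartition_of_apply_ne hτ]
      exact (cyclePartition τ).part_mem.2 (mem_univ a)
    · rw [← part_cyclePartition_of_apply_eq (notMem_support.1 (mem_compl.1 ha))]
      exact (cyclePartition τ).part_mem.2 (mem_univ a)

theorem map_card_parts_cyclePartition (τ : Perm α) :
    (cyclePartition τ).parts.val.map card = τ.partition.parts := by
  have hdisj : Disjoint (τ.cycleFactorsFinset.image support) (τ.supportᶜ.image ({·})) := by
    refine disjoint_left.2 fun c hc hc' ↦ ?_
    obtain ⟨d, hd, rfl⟩ := mem_image.1 hc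
    obtain ⟨a, -, ha⟩ := mem_image.1 hc'
    have htwo : 2 ≤ #d.support := (mem_cycleFactorsFinset_iff.1 hd).1.two_le_card_support
    simp [← ha] at htwo
  rw [parts_cyclePartition, ← disjUnion_eq_union _ _ hdisj, disjUnion_val, Multiset.map_add,
    image_val_of_injOn (injOn_support_cycleFactorsFinset τ),
    image_val_of_injOn singleton_injective.injOn, Multiset.map_map, Multiset.map_map,
    parts_partition, cycleType_def]
  simp [card_compl]

theorem part_cyclePartition_conj (g τ : Perm α) (a : α) :
    (cyclePartition (g * τ * g⁻¹)).part (g a) = ((cyclePartition τ).part a).map g.toEmbedding := by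
  ext b
  simp [mem_part_cyclePartition, sameCycle_conj, mem_map_equiv]

theorem isPartialTransversal_cyclePartition_conj {g τ : Perm α} {ν : Multiset ℕ} {s : Finset α} :
    IsPartialTransversal (cyclePartition (g * τ * g⁻¹)) ν (s.map g.toEmbedding) ↔
      IsPartialTransversal (cyclePartition τ) ν s := by
  have hinj : Set.InjOn (cyclePartition (g * τ * g⁻¹)).part (s.map g.toEmbedding) ↔
      Set.InjOn (cyclePartition τ).part s := by
    simp only [Set.InjOn, mem_coe, forall_mem_map, coe_toEmbedding, part_cyclePartition_conj,
      map_inj, g.injective.eq_iff]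
  have hmap : (s.map g.toEmbedding).val.map (fun a ↦ #((cyclePartition (g * τ * g⁻¹)).part a)) =
      s.val.map (fun a ↦ #((cyclePartition τ).part a)) := by
    simp [part_cyclePartition_conj]
  exact ⟨fun h ↦ ⟨hinj.1 h.injOn, hmap ▸ h.map_card_part⟩,
    fun h ↦ ⟨hinj.2 h.injOn, hmap.trans h.map_card_part⟩⟩

open scoped Classical in
theorem card_isPartialTransversal_cyclePartition_congr (p : (Fintype.card α).Partition)
    (ν : Multiset ℕ) {s t : Finset α} (h : #s = #t) :
    #{τ : Perm α | τ.partition = p ∧ IsPartialTransversal (cyclePartition τ) ν s} =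
      #{τ : Perm α | τ.partition = p ∧ IsPartialTransversal (cyclePartition τ) ν t} := by
  obtain ⟨g, rfl⟩ := exists_perm_map_eq_of_card_eq h
  refine card_equiv (MulAut.conj g).toEquiv fun τ ↦ ?_
  have hconj : (g * τ * g⁻¹).partition = τ.partition :=
    partition_eq_of_isConj.1 (isConj_iff.2 ⟨g, rfl⟩).symm
  simp [hconj, isPartialTransversal_cyclePartition_conj]

theorem partition_eq_iff_cycleType_eq {τ : Perm α} {p : (Fintype.card α).Partition} :
    τ.partition = p ↔ τ.cycleType = p.parts.filter (2 ≤ ·) := by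
  refine ⟨fun h ↦ h ▸ filter_parts_partition_eq_cycleType.symm, fun h ↦ ?_⟩
  have hcount : Fintype.card α - (p.parts.filter (2 ≤ ·)).sum = p.parts.count 1 := by
    have := sum_filter_two_le_add_count_one p
    omega
  rw [Nat.Partition.ext_iff, parts_partition, ← sum_cycleType, h, hcount,
    ← parts_eq_filter_two_le_add_replicate]

theorem card_partition_eq_mul (p : (Fintype.card α).Partition) :
    #{τ : Perm α | τ.partition = p} *
      (p.parts.prod * ∏ i ∈ p.parts.toFinset, (p.parts.count i)!) = (Fintype.card α)! := by
  have hsum := sum_filter_two_le_add_count_one p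
  have hprod : p.parts.prod = (p.parts.filter (2 ≤ ·)).prod := by
    simpa using congrArg Multiset.prod (parts_eq_filter_two_le_add_replicate p)
  have hcard := card_of_cycleType_mul_eq α (p.parts.filter (2 ≤ ·))
  rw [if_pos ⟨by omega, fun i hi ↦ (Multiset.mem_filter.1 hi).2⟩,
    show Fintype.card α - _ = _ from Nat.sub_eq_of_eq_add' hsum.symm] at hcard
  simp_rw [partition_eq_iff_cycleType_eq]
  rw [← hcard, prod_factorial_count_eq_mul, hprod]
  ring

open scoped Classical in
theorem card_powersetCard_isPartialTransversal_cyclePartition {ν : Multiset ℕ} (τ : Perm α)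
    (hν : ν ≤ τ.partition.parts) :
    #{s ∈ univ.powersetCard ν.card | IsPartialTransversal (cyclePartition τ) ν s} =
      ν.prod * ∏ i ∈ τ.partition.parts.toFinset,
        (τ.partition.parts.count i).choose (ν.count i) := by
  have hcount := card_isPartialTransversal (cyclePartition τ)
    (Multiset.toFinset_subset.2 (Multiset.subset_of_le hν))
  rw [map_card_parts_cyclePartition] at hcount
  rw [← hcount]
  refine congrArg card (ext fun s ↦ ?_)
  simpa using IsPartialTransversal.card_eq

open scoped Classical in
theorem choose_mul_card_isPartialTransversal_cyclePartition {ν : Multiset ℕ} {s : Finset α}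
    (hs : #s = ν.card) (p : (Fintype.card α).Partition) (hν : ν ≤ p.parts) :
    (Fintype.card α).choose ν.card *
        #{τ : Perm α | τ.partition = p ∧ IsPartialTransversal (cyclePartition τ) ν s} =
      #{τ : Perm α | τ.partition = p} *
        (ν.prod * ∏ i ∈ p.parts.toFinset, (p.parts.count i).choose (ν.count i)) := by
  have hdouble := card_mul_eq_card_mul (s := (univ : Finset α).powersetCard ν.card)
    (t := {τ : Perm α | τ.partition = p})
    (m := #{τ : Perm α | τ.partition = p ∧ IsPartialTransversal (cyclePartition τ) ν s})
    (n := ν.prod * ∏ i ∈ p.parts.toFinset, (p.parts.count i).choose (ν.count i))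
    (fun t τ ↦ IsPartialTransversal (cyclePartition τ) ν t)
    (fun t ht ↦ by
      rw [bipartiteAbove, filter_filter]
      exact card_isPartialTransversal_cyclePartition_congr p ν
        ((mem_powersetCard.1 ht).2.trans hs.symm))
    (fun τ hτ ↦ by
      obtain rfl := (mem_filter.1 hτ).2
      exact card_powersetCard_isPartialTransversal_cyclePartition τ hν)
  rwa [card_powersetCard, card_univ] at hdouble

open scoped Classical in
theorem stmt2_general {ν : Multiset ℕ} {s : Finset α} (hs : #s = ν.card)
    (p : (Fintype.card α).Partition) (hν : ν ≤ p.parts) :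
    #{τ : Perm α | τ.partition = p ∧ IsPartialTransversal (cyclePartition τ) ν s} *
      ∏ i ∈ p.parts.toFinset,
        (i ^ (p.parts.count i - ν.count i) * (ν.count i)! * (p.parts.count i - ν.count i)!) =
      (#s)! * (Fintype.card α - #s)! := by
  have hle : #s ≤ Fintype.card α := card_le_univ s
  apply Nat.eq_of_mul_eq_mul_left (Nat.choose_pos hle)
  rw [← mul_assoc, hs, choose_mul_card_isPartialTransversal_cyclePartition hs p hν, mul_assoc,
    prod_mul_prod_choose_mul_prod hν, card_partition_eq_mul, ← mul_assoc, ← hs,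
    Nat.choose_mul_factorial_mul_factorial hle]

end Perm

theorem fullCycleType_eq_parts_partition {n : ℕ} (τ : Perm (Fin n)) :
    fullCycleType τ = τ.partition.parts := by
  rw [fullCycleType, parts_partition, Fintype.card_fin]

theorem cycLen_eq_card_part {n : ℕ} (τ : Perm (Fin n)) (a : Fin n) :
    cycLen τ a = #((cyclePartition τ).part a) := by
  rw [cycLen]
  split_ifs with h
  · rw [part_cyclePartition_of_apply_eq h, card_singleton]
  · rw [part_cyclePartition_of_apply_ne h]

theorem isPartialTransversal_cyclePartition_iff {n : ℕ} {τ : Perm (Fin n)} {ν : Multiset ℕ}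
    {s : Finset (Fin n)} :
    IsPartialTransversal (cyclePartition τ) ν s ↔
      (∀ a ∈ s, ∀ b ∈ s, a ≠ b → ¬ τ.SameCycle a b) ∧
        ∀ i, #{a ∈ s | cycLen τ a = i} = ν.count i := by
  have hinj : Set.InjOn (cyclePartition τ).part s ↔
      ∀ a ∈ s, ∀ b ∈ s, a ≠ b → ¬ τ.SameCycle a b := by
    simp only [Set.InjOn, part_cyclePartition_eq_iff, mem_coe, ne_eq, not_imp_not]
  have hmap : s.val.map (fun a ↦ #((cyclePartition τ).part a)) = ν ↔
      ∀ i, #{a ∈ s | cycLen τ a = i} = ν.count i := by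
    simp only [Multiset.ext, Multiset.count_map, cycLen_eq_card_part, card_def, filter_val, eq_comm]
  rw [← hinj, ← hmap]
  exact ⟨fun h ↦ ⟨h.injOn, h.map_card_part⟩, fun h ↦ ⟨h.1, h.2⟩⟩

open scoped Classical in
/-- Count of permutations `τ` of cycle type `λ` whose cycles contain the `k+1` points moved
by a fixed `(k+1)`-cycle `σ` in distinct cycles, with exactly `γᵢ` of these points in cycles
of length `i`: it equals `(k+1)! (n-k-1)! / ∏ᵢ i^{αᵢ-γᵢ} γᵢ! (αᵢ-γᵢ)!` (stated multiplied out). -/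
theorem stmt2 (n k : ℕ) (σ : Equiv.Perm (Fin n)) (hσ : σ.IsCycle)
    (hcard : σ.support.card = k + 1)
    (lam : Multiset ℕ) (h0 : (0 : ℕ) ∉ lam) (hsum : lam.sum = n)
    (ν : Multiset ℕ) (hν : ν ≤ lam) (hνc : ν.card = k + 1) :
    (Finset.univ.filter (fun τ : Equiv.Perm (Fin n) =>
        fullCycleType τ = lam ∧
        (∀ a ∈ σ.support, ∀ b ∈ σ.support, a ≠ b → ¬ τ.SameCycle a b) ∧
        (∀ i : ℕ, (σ.support.filter (fun a => cycLen τ a = i)).card = ν.count i))).card *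
      ∏ i ∈ lam.toFinset,
        (i ^ (lam.count i - ν.count i) * Nat.factorial (ν.count i) *
          Nat.factorial (lam.count i - ν.count i)) =
      Nat.factorial (k + 1) * Nat.factorial (n - k - 1) := by
  let p : (Fintype.card (Fin n)).Partition :=
    ⟨lam, fun hi ↦ Nat.pos_of_ne_zero (ne_of_mem_of_not_mem hi h0), by rw [hsum, Fintype.card_fin]⟩
  simpa [p, Nat.Partition.ext_iff, fullCycleType_eq_parts_partition, hcard, Nat.sub_sub,
    isPartialTransversal_cyclePartition_iff] using stmt2_general (hcard.trans hνc.symm) p hν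
end

section
/- Let S̄ = S/(m_{(a,b)} : a ≠ b) be the quotient of the ring of MacMahon symmetric functions by the ideal generated by all m_{(a,b)} with a ≠ b. Then the images of the monomial symmetric functions m_{(λ,0)(0,1)^{|λ|}}, where λ ranges over all partitions, form a ℂ-linear basis of S̄. -/
/-- The monomial MacMahon symmetric function `m_Λ` attached to a bipartite partition
`Λ` (a multiset of vectors in `ℕ×ℕ`), as a formal power series in two families of
variables `xᵢ = X (i,0)`, `yᵢ = X (i,1)`: the sum, with coefficients `0` or `1`, of all
monomials whose multiset of exponent pairs equals `Λ`. -/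
noncomputable def mm (Λ : Multiset (ℕ × ℕ)) : MvPowerSeries (ℕ × Fin 2) ℂ :=
  fun d => if (d.support.image Prod.fst).val.map
      (fun i => (d (i, 0), d (i, 1))) = Λ then 1 else 0

/-- The bipartite partition `(λ,0)(0,1)^{|λ|}` attached to an ordinary partition `λ`. -/
noncomputable def bip (l : Multiset ℕ) : Multiset (ℕ × ℕ) :=
  l.map (fun i => (i, 0)) + Multiset.replicate l.sum (0, 1)

/-- The ideal of `S` generated by the `m_{(a,b)}` with `a ≠ b`, as a `ℂ`-submodule:
the span of the products `m_{(a,b)} · m_Λ`. -/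
noncomputable def Jbar : Submodule ℂ (MvPowerSeries (ℕ × Fin 2) ℂ) :=
  Submodule.span ℂ {x | ∃ (a b : ℕ) (Λ : Multiset (ℕ × ℕ)),
    a ≠ b ∧ (0, 0) ∉ Λ ∧ x = mm {(a, b)} * mm Λ}

/-!
Write `p_v = m_v` for the power sum of a single vector `v`. Multiplying a monomial function `m_N` by
`p_v` either adds `v` as a new part or merges it into a part of `N`, so the products of power sums
are triangular over the `m_Λ`. Hence the ideal is spanned by the products having a factor `p_(a,b)`
with `a ≠ b`, and the diagonal products `∏ p_(a,a)` form a basis of the quotient.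

For a part `v = (0,b)`, the product `p_v m_N` lies in the ideal: modulo the ideal, `m_Λ` with `v` in
`Λ` is, up to positive factors, minus the sum over all ways of merging `v` into another part.
Starting from `Λ = (λ,0)(0,1)^{|λ|}` and merging until no part has first coordinate `0`, every term
reached has the sign `(-1)^{|λ|}` and the entries of `λ` as first coordinates. Only the diagonal
terms contribute, up to products with fewer factors, and they do occur: let each `λᵢ` absorb exactly
`λᵢ` of the parts `(0,1)`. So `m_Λ` is a nonzero multiple of `∏ p_(λᵢ,λᵢ)` plus diagonal products
with fewer factors, and triangularity transfers the basis property.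
-/

namespace MacMahon

section Triangular

open Submodule Set

variable {ι α K E : Type*} [DivisionRing K] [AddCommGroup E] [Module K E]

/-- The family `v` is triangular over the family `u` on `s`, with respect to the rank `r`: each
`v i` is a nonzero multiple of `u i` plus a combination of the `u j` of smaller rank. -/
def IsTriangularOn [LT α] (K : Type*) [DivisionRing K] [Module K E] (r : ι → α) (s : Set ι)
    (u v : ι → E) : Prop :=
  ∀ i ∈ s, ∃ c : K, c ≠ 0 ∧ v i - c • u i ∈ span K (u '' {j ∈ s | r j < r i})

variable {r : ι → α} {s : Set ι} {u v : ι → E}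

theorem IsTriangularOn.restrict_lt [Preorder α] (h : IsTriangularOn K r s u v) (a : α) :
    IsTriangularOn K r {i ∈ s | r i < a} u v := by
  rintro i ⟨his, hia⟩
  obtain ⟨c, hc, hmem⟩ := h i his
  have hsub : {j ∈ s | r j < r i} ⊆ {j ∈ {i ∈ s | r i < a} | r j < r i} :=
    fun j hj => ⟨⟨hj.1, hj.2.trans hia⟩, hj.2⟩
  exact ⟨c, hc, span_mono (image_mono hsub) hmem⟩

theorem IsTriangularOn.span_eq [Preorder α] [WellFoundedLT α] (h : IsTriangularOn K r s u v) :
    span K (v '' s) = span K (u '' s) := by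
  have lower_le (i : ι) : span K (u '' {j ∈ s | r j < r i}) ≤ span K (u '' s) :=
    span_mono (image_mono (sep_subset _ _))
  apply le_antisymm <;> rw [span_le, image_subset_iff]
  · intro i hi
    obtain ⟨c, -, hmem⟩ := h i hi
    have := add_mem (lower_le i hmem) (smul_mem _ c (subset_span (mem_image_of_mem u hi)))
    simpa using this
  · intro i
    induction hr : r i using WellFoundedLT.induction generalizing i with
    | ind a ih =>
      intro hi
      subst hr
      obtain ⟨c, hc, hmem⟩ := h i hi
      have lower_le' : span K (u '' {j ∈ s | r j < r i}) ≤ span K (v '' s) := by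
        rw [span_le, image_subset_iff]
        exact fun j hj => ih _ hj.2 rfl hj.1
      have hcu : c • u i ∈ span K (v '' s) := by
        simpa using sub_mem (subset_span (mem_image_of_mem v hi)) (lower_le' hmem)
      exact (smul_mem_iff _ hc).1 hcu

theorem IsTriangularOn.linearIndepOn [LinearOrder α] (h : IsTriangularOn K r s u v)
    (hu : LinearIndepOn K u s) : LinearIndepOn K v s := by
  classical
  rw [linearIndepOn_iff']
  intro t g hts hsum
  by_contra! hne
  obtain ⟨i₀, hi₀, hgi₀⟩ := hne
  obtain ⟨i, hi, hmax⟩ := (t.filter (g · ≠ 0)).exists_max_image r ⟨i₀, by simp [hi₀, hgi₀]⟩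
  obtain ⟨hit, hgi⟩ := Finset.mem_filter.1 hi
  have lower_le {j : ι} (hj : r j ≤ r i) :
      span K (u '' {k ∈ s | r k < r j}) ≤ span K (u '' (s \ {i})) :=
    span_mono (image_mono fun k hk => ⟨hk.1, by rintro rfl; exact (hk.2.trans_le hj).false⟩)
  have other_mem : ∀ j ∈ t.erase i, g j • v j ∈ span K (u '' (s \ {i})) := by
    intro j hj
    obtain ⟨hji, hjt⟩ := Finset.mem_erase.1 hj
    rcases eq_or_ne (g j) 0 with h0 | h0
    · simp [h0]
    obtain ⟨c, -, hmem⟩ := h j (hts hjt)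
    have := add_mem (lower_le (hmax j (by simp [hjt, h0])) hmem)
      (smul_mem _ c (subset_span (mem_image_of_mem u ⟨hts hjt, hji⟩)))
    exact smul_mem _ _ (by simpa using this)
  have hvi : v i ∈ span K (u '' (s \ {i})) := by
    rw [← smul_mem_iff _ hgi, eq_neg_of_add_eq_zero_left ((t.add_sum_erase _ hit).trans hsum)]
    exact neg_mem (sum_mem other_mem)
  obtain ⟨c, hc, hmem⟩ := h i (hts hit)
  have hcu : c • u i ∈ span K (u '' (s \ {i})) := by
    simpa using sub_mem hvi (lower_le le_rfl hmem)
  exact hc (hu.eq_zero_of_smul_mem_span (hts hit) c hcu)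

end Triangular

section Shape

variable {ι V : Type*}

/-- The multiset of nonzero values of a finitely supported function. -/
def shape [Zero V] (f : ι →₀ V) : Multiset V := f.support.val.map f

theorem shape_eq_zero [Zero V] {f : ι →₀ V} : shape f = 0 ↔ f = 0 := by
  simp [shape]

theorem shape_eq_cons_shape_erase [Zero V] {f : ι →₀ V} {j : ι} (hj : f j ≠ 0) :
    shape f = f j ::ₘ shape (f.erase j) := by
  classical
  have hmem : j ∈ f.support.val := Finsupp.mem_support_iff.2 hj
  have hvals : shape (f.erase j) = (f.support.val.erase j).map f := by
    rw [shape, Finsupp.support_erase, Finset.erase_val]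
    refine Multiset.map_congr rfl fun i hi => Finsupp.erase_ne ?_
    rintro rfl
    exact (f.support.nodup.mem_erase_iff.1 hi).1 rfl
  rw [hvals, ← Multiset.map_cons, Multiset.cons_erase hmem, shape]

theorem shape_single_add [AddZeroClass V] {f : ι →₀ V} {j : ι} {v : V} (hv : v ≠ 0) (hj : f j = 0) :
    shape (Finsupp.single j v + f) = v ::ₘ shape f := by
  have hval : (Finsupp.single j v + f) j = v := by simp [hj]
  rw [shape_eq_cons_shape_erase (j := j) (by rwa [hval]), hval, Finsupp.erase_add,
    Finsupp.erase_single, zero_add, Finsupp.erase_of_notMem_support (by simpa using hj)]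

theorem shape_eq_singleton_iff [AddZeroClass V] {f : ι →₀ V} {v : V} (hv : v ≠ 0) :
    shape f = {v} ↔ ∃ j, Finsupp.single j v = f := by
  constructor
  · intro h
    have hcard : f.support.card = 1 := by simpa [shape] using congrArg Multiset.card h
    obtain ⟨j, w, hw, rfl⟩ := Finsupp.card_support_eq_one'.1 hcard
    have := shape_single_add (f := 0) (j := j) hw rfl
    rw [add_zero, h, shape_eq_zero.2 rfl, Multiset.cons_zero, Multiset.singleton_inj] at this
    exact ⟨j, by rw [this]⟩
  · rintro ⟨j, rfl⟩
    simpa [shape_eq_zero.2] using shape_single_add (f := 0) (j := j) hv rfl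

theorem exists_shape_eq [AddZeroClass V] [Infinite ι] {L : Multiset V} (hL : 0 ∉ L) :
    ∃ f : ι →₀ V, shape f = L := by
  induction L using Multiset.induction_on with
  | empty => exact ⟨0, shape_eq_zero.2 rfl⟩
  | cons v L ih =>
    rw [Multiset.mem_cons, not_or] at hL
    obtain ⟨f, rfl⟩ := ih hL.2
    obtain ⟨j, hj⟩ := Infinite.exists_notMem_finset f.support
    exact ⟨Finsupp.single j v + f, shape_single_add (Ne.symm hL.1)
      (Finsupp.notMem_support_iff.1 hj)⟩

theorem exists_single_add_eq_iff [AddCommMonoid V] [DecidableEq V] {L : Multiset V} (hL : 0 ∉ L)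
    (f : ι →₀ V) (v : V) (j : ι) :
    (∃ g, Finsupp.single j v + g = f ∧ shape g = L) ↔
      (f j = v ∧ shape (f.erase j) = L) ∨
        ∃ u ∈ L, f j = u + v ∧ shape (f.erase j) = L.erase u := by
  constructor
  · rintro ⟨g, rfl, rfl⟩
    have herase : (Finsupp.single j v + g).erase j = g.erase j := by
      rw [Finsupp.erase_add, Finsupp.erase_single, zero_add]
    rw [herase, Finsupp.add_apply, Finsupp.single_eq_same, add_comm]
    by_cases hg : g j = 0
    · left
      rw [hg, zero_add, Finsupp.erase_of_notMem_support (by simpa using hg)]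
      exact ⟨rfl, rfl⟩
    · right
      rw [shape_eq_cons_shape_erase hg]
      exact ⟨g j, by simp⟩
  · rintro (⟨hv, hL'⟩ | ⟨u, hu, hv, hL'⟩)
    · exact ⟨f.erase j, by rw [← hv, Finsupp.single_add_erase], hL'⟩
    · refine ⟨Finsupp.single j u + f.erase j, ?_, ?_⟩
      · rw [← add_assoc, ← Finsupp.single_add, add_comm v, ← hv, Finsupp.single_add_erase]
      · rw [shape_single_add (by rintro rfl; exact hL hu) Finsupp.erase_same, hL',
          Multiset.cons_erase hu]

open Finset in
theorem card_exists_single_add_eq [AddCancelCommMonoid V] [DecidableEq V] {L : Multiset V}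
    (hL : 0 ∉ L) (f : ι →₀ V) (v : V)
    [DecidablePred fun j => ∃ g, Finsupp.single j v + g = f ∧ shape g = L] :
    #{j ∈ f.support | ∃ g, Finsupp.single j v + g = f ∧ shape g = L} =
      #{j ∈ f.support | f j = v ∧ shape (f.erase j) = L} +
        ∑ u ∈ L.toFinset, #{j ∈ f.support | f j = u + v ∧ shape (f.erase j) = L.erase u} := by
  classical
  simp only [exists_single_add_eq_iff hL, filter_or]
  rw [card_union_of_disjoint, ← card_biUnion]
  · congr 2
    ext j
    simp only [mem_filter, mem_biUnion, Multiset.mem_toFinset]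
    tauto
  · intro u _ u' _ hne
    refine disjoint_filter.2 fun j _ h h' => hne (add_right_cancel (h.1.symm.trans h'.1))
  · refine disjoint_filter.2 fun j _ h => ?_
    rintro ⟨u, hu, h', -⟩
    have hu0 : u = 0 := by simpa [h.1] using h'
    exact hL (hu0 ▸ hu)

/-- The product of the factorials of the multiplicities of `L`, that is, the number of permutations
of the parts of `L` that preserve their values. -/
def symmetryFactor [DecidableEq V] (L : Multiset V) : ℕ :=
  ∏ u ∈ L.toFinset, (L.count u).factorial

theorem symmetryFactor_ne_zero [DecidableEq V] (L : Multiset V) : symmetryFactor L ≠ 0 :=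
  Finset.prod_ne_zero_iff.2 fun _ _ => Nat.factorial_ne_zero _

theorem symmetryFactor_eq_prod [DecidableEq V] {L : Multiset V} {T : Finset V}
    (h : L.toFinset ⊆ T) : symmetryFactor L = ∏ u ∈ T, (L.count u).factorial := by
  refine Finset.prod_subset h fun u _ hu => ?_
  rw [Multiset.count_eq_zero_of_notMem (by simpa using hu), Nat.factorial_zero]

theorem symmetryFactor_cons [DecidableEq V] (u : V) (L : Multiset V) :
    symmetryFactor (u ::ₘ L) = (u ::ₘ L).count u * symmetryFactor L := by
  have hsub : L.toFinset ⊆ (u ::ₘ L).toFinset := by simp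
  have hu : u ∈ (u ::ₘ L).toFinset := by simp
  rw [symmetryFactor, symmetryFactor_eq_prod hsub, ← Finset.mul_prod_erase _ _ hu,
    ← Finset.mul_prod_erase _ (fun w => (L.count w).factorial) hu, Multiset.count_cons_self,
    Nat.factorial_succ, mul_assoc]
  congr 2
  refine Finset.prod_congr rfl fun w hw => ?_
  rw [Multiset.count_cons_of_ne (Finset.ne_of_mem_erase hw)]

open Finset in
theorem symmetryFactor_mul_card [Zero V] [DecidableEq V] (w : V) (L : Multiset V) (f : ι →₀ V) :
    symmetryFactor L * #{j ∈ f.support | f j = w ∧ shape (f.erase j) = L} =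
      if shape f = w ::ₘ L then symmetryFactor (w ::ₘ L) else 0 := by
  have hiff : ∀ j ∈ f.support, (f j = w ∧ shape (f.erase j) = L ↔ f j = w ∧ shape f = w ::ₘ L) := by
    intro j hj
    refine and_congr_right fun hjw => ?_
    rw [shape_eq_cons_shape_erase (Finsupp.mem_support_iff.1 hj), hjw, Multiset.cons_inj_right]
  rw [filter_congr hiff]
  split_ifs with h
  · have hcount : #{j ∈ f.support | f j = w} = (shape f).count w := by
      simp only [shape, Multiset.count_map, eq_comm (a := w)]
      rfl
    simp only [h, and_true]
    rw [hcount, h, symmetryFactor_cons, mul_comm]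
  · simp [h]

end Shape

section Coefficients

open Finset

/-- The exponent vector of a monomial, read as the finitely supported family of exponent pairs of
`(xᵢ, yᵢ)`; its `shape` decides which `m_Λ` contains the monomial. -/
noncomputable def columns : (ℕ × Fin 2 →₀ ℕ) ≃+ (ℕ →₀ ℕ × ℕ) :=
  (Finsupp.curryAddEquiv).trans
    (Finsupp.mapRange.addEquiv
      ((Finsupp.linearEquivFunOnFinite ℕ ℕ (Fin 2)).trans (LinearEquiv.finTwoArrow ℕ ℕ)).toAddEquiv)

theorem columns_apply (d : ℕ × Fin 2 →₀ ℕ) (i : ℕ) : columns d i = (d (i, 0), d (i, 1)) := rfl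

theorem support_columns (d : ℕ × Fin 2 →₀ ℕ) : (columns d).support = d.support.image Prod.fst := by
  ext i
  simp [columns_apply, Fin.exists_fin_two, imp_iff_not_or]

theorem coeff_mm (L : Multiset (ℕ × ℕ)) (d : ℕ × Fin 2 →₀ ℕ) :
    MvPowerSeries.coeff d (mm L) = if shape (columns d) = L then 1 else 0 := by
  rw [shape, support_columns]
  rfl

theorem mm_zero : mm 0 = 1 := by
  ext d
  simp [coeff_mm, MvPowerSeries.coeff_one, shape_eq_zero]

theorem coeff_mm_singleton_mul_mm {v : ℕ × ℕ} (hv : v ≠ 0) (L : Multiset (ℕ × ℕ))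
    (d : ℕ × Fin 2 →₀ ℕ)
    [DecidablePred fun j => ∃ g, Finsupp.single j v + g = columns d ∧ shape g = L] :
    MvPowerSeries.coeff d (mm {v} * mm L) =
      #{j ∈ (columns d).support | ∃ g, Finsupp.single j v + g = columns d ∧ shape g = L} := by
  simp only [MvPowerSeries.coeff_mul, coeff_mm, ← ite_and, mul_ite, mul_one, mul_zero]
  rw [sum_boole, Nat.cast_inj]
  symm
  let column (j : ℕ) := columns.symm (Finsupp.single j v)
  refine card_bij (fun j _ => (column j, d - column j)) ?_ ?_ ?_
  · intro j hj
    obtain ⟨g, hg, hL⟩ := (mem_filter.1 hj).2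
    have hd : d = columns.symm (Finsupp.single j v) + columns.symm g := by
      rw [← map_add, hg, AddEquiv.symm_apply_apply]
    simp [column, hd, hL, (shape_eq_singleton_iff hv).2 ⟨j, rfl⟩]
  · intro i _ j _ hij
    exact (Finsupp.single_left_inj hv).1 (columns.symm.injective (Prod.mk.inj hij).1)
  · rintro ⟨a, b⟩ hab
    simp only [mem_filter, HasAntidiagonal.mem_antidiagonal] at hab
    obtain ⟨rfl, hb, ha⟩ := hab
    obtain ⟨j, hj⟩ := (shape_eq_singleton_iff hv).1 ha
    refine ⟨j, ?_, by simp [column, hj]⟩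
    simp only [mem_filter, map_add, ← hj]
    refine ⟨?_, columns b, rfl, hb⟩
    have : v + columns b j ≠ 0 := fun h => hv (add_eq_zero.1 h).1
    simpa using this

/-- The augmented monomial function of `L`. In this normalization the multiplicities disappear from
the product rule with `m_v`. -/
noncomputable def augmented (L : Multiset (ℕ × ℕ)) : MvPowerSeries (ℕ × Fin 2) ℂ :=
  (symmetryFactor L : ℂ) • mm L

theorem coeff_augmented_cons (w : ℕ × ℕ) (L : Multiset (ℕ × ℕ)) (d : ℕ × Fin 2 →₀ ℕ) :
    MvPowerSeries.coeff d (augmented (w ::ₘ L)) =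
      (symmetryFactor L * #{j ∈ (columns d).support |
        columns d j = w ∧ shape ((columns d).erase j) = L} : ℕ) := by
  rw [symmetryFactor_mul_card, augmented, map_smul, coeff_mm]
  split_ifs <;> simp

theorem mm_singleton_mul_augmented {v : ℕ × ℕ} (hv : v ≠ 0) {L : Multiset (ℕ × ℕ)} (hL : 0 ∉ L) :
    mm {v} * augmented L =
      augmented (v ::ₘ L) + (L.map fun u => augmented ((u + v) ::ₘ L.erase u)).sum := by
  classical
  have haut : ∀ u ∈ L.toFinset, symmetryFactor L = L.count u * symmetryFactor (L.erase u) := by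
    intro u hu
    rw [Multiset.mem_toFinset] at hu
    conv_lhs => rw [← Multiset.cons_erase hu, symmetryFactor_cons, Multiset.cons_erase hu]
  ext d
  rw [augmented, mul_smul_comm, map_smul, coeff_mm_singleton_mul_mm hv, smul_eq_mul,
    card_exists_single_add_eq hL, Finset.sum_multiset_map_count, map_add, map_sum,
    coeff_augmented_cons, Nat.cast_add, mul_add, ← Nat.cast_mul, Nat.cast_sum, mul_sum]
  congr 1
  refine sum_congr rfl fun u hu => ?_
  rw [map_nsmul, coeff_augmented_cons, haut u hu]
  push_cast
  rw [nsmul_eq_mul, mul_assoc]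

end Coefficients

section PowerSums

open Submodule Multiset

/-- Partitions whose parts lie in `α`, encoded as the multisets of their nonzero parts. -/
def partitions (α : Type*) [Zero α] : Set (Multiset α) := {s | 0 ∉ s}

theorem cons_mem_partitions {α : Type*} [Zero α] {a : α} {s : Multiset α} :
    a ::ₘ s ∈ partitions α ↔ a ≠ 0 ∧ s ∈ partitions α := by
  simp [partitions, eq_comm]

theorem erase_mem_partitions {α : Type*} [Zero α] [DecidableEq α] {s : Multiset α}
    (hs : s ∈ partitions α) (a : α) : s.erase a ∈ partitions α :=
  fun h => hs (Multiset.mem_of_mem_erase h)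

theorem linearIndepOn_mm : LinearIndepOn ℂ mm (partitions (ℕ × ℕ)) := by
  rw [linearIndepOn_iff']
  intro t g hts hsum L hL
  obtain ⟨f, rfl⟩ := exists_shape_eq (ι := ℕ) (hts hL)
  have := congrArg (MvPowerSeries.coeff (columns.symm f)) hsum
  simpa [coeff_mm, hL] using this

theorem augmented_mem_span {T : Set (Multiset (ℕ × ℕ))} {L : Multiset (ℕ × ℕ)} (hL : L ∈ T) :
    augmented L ∈ span ℂ (mm '' T) :=
  smul_mem _ _ (subset_span (Set.mem_image_of_mem mm hL))

/-- The power-sum product `∏ p_v` over the parts `v` of `s`, where `p_v = m_v`. -/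
noncomputable def powerSumProd (s : Multiset (ℕ × ℕ)) : MvPowerSeries (ℕ × Fin 2) ℂ :=
  (s.map fun v => mm {v}).prod

theorem powerSumProd_cons (v : ℕ × ℕ) (s : Multiset (ℕ × ℕ)) :
    powerSumProd (v ::ₘ s) = mm {v} * powerSumProd s := by
  simp [powerSumProd]

theorem sum_augmented_merge_mem_span {v : ℕ × ℕ} (hv : v ≠ 0) {L : Multiset (ℕ × ℕ)}
    (hL : L ∈ partitions (ℕ × ℕ)) :
    (L.map fun u => augmented ((u + v) ::ₘ L.erase u)).sum ∈
      span ℂ (mm '' {t ∈ partitions (ℕ × ℕ) | card t < card L + 1}) := by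
  refine multiset_sum_mem _ fun x hx => ?_
  obtain ⟨u, hu, rfl⟩ := Multiset.mem_map.1 hx
  refine augmented_mem_span ⟨cons_mem_partitions.2 ⟨?_, erase_mem_partitions hL u⟩, ?_⟩
  · exact fun h => hv (add_eq_zero.1 h).2
  · rw [card_cons, card_erase_add_one hu]
    exact Nat.lt_succ_self _

theorem mm_singleton_mul_mem_span {v : ℕ × ℕ} (hv : v ≠ 0) {n : ℕ}
    {x : MvPowerSeries (ℕ × Fin 2) ℂ}
    (hx : x ∈ span ℂ (mm '' {t ∈ partitions (ℕ × ℕ) | card t < n})) :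
    mm {v} * x ∈ span ℂ (mm '' {t ∈ partitions (ℕ × ℕ) | card t < n + 1}) := by
  suffices span ℂ (mm '' {t ∈ partitions (ℕ × ℕ) | card t < n}) ≤
      (span ℂ (mm '' {t ∈ partitions (ℕ × ℕ) | card t < n + 1})).comap
        (LinearMap.mulLeft ℂ (mm {v})) from this hx
  rw [span_le, Set.image_subset_iff]
  rintro L ⟨hL, hn⟩
  have hmul : mm {v} * augmented L ∈
      span ℂ (mm '' {t ∈ partitions (ℕ × ℕ) | card t < n + 1}) := by
    rw [mm_singleton_mul_augmented hv hL]
    refine add_mem (augmented_mem_span ⟨cons_mem_partitions.2 ⟨hv, hL⟩, by simpa using hn⟩) ?_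
    have hsub : {t ∈ partitions (ℕ × ℕ) | card t < card L + 1} ⊆
        {t ∈ partitions (ℕ × ℕ) | card t < n + 1} :=
      fun t ht => ⟨ht.1, ht.2.trans (Nat.succ_lt_succ hn)⟩
    exact span_mono (Set.image_mono hsub) (sum_augmented_merge_mem_span hv hL)
  rw [augmented, mul_smul_comm] at hmul
  change mm {v} * mm L ∈ span ℂ _
  exact (smul_mem_iff _ (Nat.cast_ne_zero.2 (symmetryFactor_ne_zero L))).1 hmul

theorem powerSumProd_sub_augmented_mem_span {s : Multiset (ℕ × ℕ)}
    (hs : s ∈ partitions (ℕ × ℕ)) :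
    powerSumProd s - augmented s ∈
      span ℂ (mm '' {t ∈ partitions (ℕ × ℕ) | card t < card s}) := by
  induction s using Multiset.induction_on with
  | empty => simp [powerSumProd, augmented, symmetryFactor, mm_zero]
  | cons v s ih =>
    obtain ⟨hv, hs⟩ := cons_mem_partitions.1 hs
    have hexpand : powerSumProd (v ::ₘ s) - augmented (v ::ₘ s) =
        mm {v} * (powerSumProd s - augmented s) +
          (s.map fun u => augmented ((u + v) ::ₘ s.erase u)).sum := by
      rw [powerSumProd_cons, mul_sub, mm_singleton_mul_augmented hv hs]
      abel
    rw [hexpand, card_cons]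
    exact add_mem (mm_singleton_mul_mem_span hv (ih hs)) (sum_augmented_merge_mem_span hv hs)

theorem isTriangularOn_powerSumProd :
    IsTriangularOn ℂ card (partitions (ℕ × ℕ)) mm powerSumProd := fun s hs =>
  ⟨symmetryFactor s, Nat.cast_ne_zero.2 (symmetryFactor_ne_zero s),
    powerSumProd_sub_augmented_mem_span hs⟩

theorem Jbar_eq_span_powerSumProd :
    Jbar = span ℂ (powerSumProd '' {s ∈ partitions (ℕ × ℕ) | ∃ v ∈ s, v.1 ≠ v.2}) := by
  have hspan := isTriangularOn_powerSumProd.span_eq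
  apply le_antisymm
  · refine span_le.2 ?_
    rintro _ ⟨a, b, L, hab, hL, rfl⟩
    have hle : span ℂ (powerSumProd '' partitions (ℕ × ℕ)) ≤
        (span ℂ (powerSumProd '' {s ∈ partitions (ℕ × ℕ) | ∃ v ∈ s, v.1 ≠ v.2})).comap
          (LinearMap.mulLeft ℂ (mm {(a, b)})) := by
      rw [span_le, Set.image_subset_iff]
      intro s hs
      have hv : (a, b) ≠ 0 := fun h => hab (by simp_all)
      rw [Set.mem_preimage, comap_coe, Set.mem_preimage, LinearMap.mulLeft_apply,
        ← powerSumProd_cons]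
      exact subset_span ⟨_, ⟨cons_mem_partitions.2 ⟨hv, hs⟩, _, mem_cons_self _ _, hab⟩, rfl⟩
    exact hle (hspan ▸ subset_span (Set.mem_image_of_mem mm hL))
  · rw [span_le, Set.image_subset_iff]
    rintro s ⟨hs, v, hvs, hv⟩
    obtain ⟨t, rfl⟩ := Multiset.exists_cons_of_mem hvs
    have hle : span ℂ (mm '' partitions (ℕ × ℕ)) ≤ Jbar.comap (LinearMap.mulLeft ℂ (mm {v})) := by
      rw [span_le, Set.image_subset_iff]
      exact fun L hL => subset_span ⟨v.1, v.2, L, hv, hL, rfl⟩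
    rw [Set.mem_preimage, powerSumProd_cons]
    refine hle (hspan ▸ subset_span (Set.mem_image_of_mem powerSumProd ?_))
    exact (cons_mem_partitions.1 hs).2

/-- The power-sum product `∏ p_(a,a)` over the parts `a` of `l`. Modulo `Jbar` these are the
monomials in the free generators of `S̄`. -/
noncomputable def diagonalProd (l : Multiset ℕ) : MvPowerSeries (ℕ × Fin 2) ℂ :=
  powerSumProd (l.map fun a => (a, a))

theorem linearIndepOn_mkQ_diagonalProd :
    LinearIndepOn ℂ (Jbar.mkQ ∘ diagonalProd) (partitions ℕ) := by
  let diagonal (l : Multiset ℕ) : Multiset (ℕ × ℕ) := l.map fun a => (a, a)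
  let T : Set (Multiset (ℕ × ℕ)) := {s ∈ partitions (ℕ × ℕ) | ∃ v ∈ s, v.1 ≠ v.2}
  have diagonal_injective : Function.Injective diagonal :=
    Multiset.map_injective fun a b h => (Prod.mk.inj h).1
  have hT : LinearIndepOn ℂ powerSumProd T :=
    (isTriangularOn_powerSumProd.linearIndepOn linearIndepOn_mm).mono fun _ h => h.1
  have hdisj : Disjoint T (diagonal '' partitions ℕ) := by
    rw [Set.disjoint_right]
    rintro _ ⟨l, -, rfl⟩ ⟨-, v, hv, hne⟩
    obtain ⟨a, -, rfl⟩ := Multiset.mem_map.1 hv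
    exact hne rfl
  have hunion : T ∪ diagonal '' partitions ℕ ⊆ partitions (ℕ × ℕ) := by
    refine Set.union_subset (fun _ h => h.1) ?_
    rintro _ ⟨l, hl, rfl⟩ h0
    obtain ⟨a, ha, ha0⟩ := Multiset.mem_map.1 h0
    exact hl ((Prod.mk.inj ha0).1 ▸ ha)
  have hquot : LinearIndepOn ℂ (Jbar.mkQ ∘ powerSumProd) (diagonal '' partitions ℕ) := by
    rw [Jbar_eq_span_powerSumProd]
    exact (hT.quotient_iff_union hdisj).2
      ((isTriangularOn_powerSumProd.linearIndepOn linearIndepOn_mm).mono hunion)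
  exact hquot.comp_of_image diagonal_injective.injOn

end PowerSums

section LeadingTerm

open Submodule Multiset

theorem powerSumProd_mem_Jbar {s : Multiset (ℕ × ℕ)} (hs : s ∈ partitions (ℕ × ℕ))
    (hne : ∃ v ∈ s, v.1 ≠ v.2) : powerSumProd s ∈ Jbar :=
  Jbar_eq_span_powerSumProd ▸ subset_span (Set.mem_image_of_mem _ ⟨hs, hne⟩)

theorem powerSumProd_eq_diagonalProd {s : Multiset (ℕ × ℕ)} (hdiag : ∀ v ∈ s, v.1 = v.2) :
    powerSumProd s = diagonalProd (s.map Prod.fst) := by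
  rw [diagonalProd, Multiset.map_map]
  conv_lhs => rw [← Multiset.map_id s]
  exact congrArg _ (Multiset.map_congr rfl fun v hv => Prod.ext rfl (hdiag v hv).symm)

theorem map_fst_mem_partitions {s : Multiset (ℕ × ℕ)} (hs : s ∈ partitions (ℕ × ℕ))
    (hdiag : ∀ v ∈ s, v.1 = v.2) : s.map Prod.fst ∈ partitions ℕ := by
  intro h0
  obtain ⟨v, hv, hv0⟩ := Multiset.mem_map.1 h0
  obtain rfl : v = 0 := Prod.ext hv0 ((hdiag v hv).symm.trans hv0)
  exact hs hv

theorem mkQ_mem_span_diagonalProd {n : ℕ} {x : MvPowerSeries (ℕ × Fin 2) ℂ}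
    (hx : x ∈ span ℂ (mm '' {t ∈ partitions (ℕ × ℕ) | card t < n})) :
    Jbar.mkQ x ∈ span ℂ (Jbar.mkQ ∘ diagonalProd '' {l ∈ partitions ℕ | card l < n}) := by
  rw [← (isTriangularOn_powerSumProd.restrict_lt n).span_eq] at hx
  suffices span ℂ (powerSumProd '' {s ∈ partitions (ℕ × ℕ) | card s < n}) ≤
      (span ℂ (Jbar.mkQ ∘ diagonalProd '' {l ∈ partitions ℕ | card l < n})).comap Jbar.mkQ
    from this hx
  rw [span_le, Set.image_subset_iff]
  rintro s ⟨hs, hn⟩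
  rw [Set.mem_preimage, comap_coe, Set.mem_preimage]
  by_cases hdiag : ∀ v ∈ s, v.1 = v.2
  · rw [powerSumProd_eq_diagonalProd hdiag]
    exact subset_span ⟨_, ⟨map_fst_mem_partitions hs hdiag, by simpa using hn⟩, rfl⟩
  · push Not at hdiag
    rw [mkQ_apply, (Quotient.mk_eq_zero _).2 (powerSumProd_mem_Jbar hs hdiag)]
    exact zero_mem _

/-- Modulo `Jbar`, `x` equals `c` times the diagonal product of `l` up to diagonal products with
fewer factors. -/
def HasLeadingTerm (x : MvPowerSeries (ℕ × Fin 2) ℂ) (c : ℂ) (l : Multiset ℕ) : Prop :=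
  Jbar.mkQ x - c • Jbar.mkQ (diagonalProd l) ∈
    span ℂ (Jbar.mkQ ∘ diagonalProd '' {m ∈ partitions ℕ | card m < card l})

theorem HasLeadingTerm.multiset_sum {ι : Type*} {s : Multiset ι}
    {x : ι → MvPowerSeries (ℕ × Fin 2) ℂ} {c : ι → ℂ} {l : Multiset ℕ}
    (h : ∀ i ∈ s, HasLeadingTerm (x i) (c i) l) :
    HasLeadingTerm (s.map x).sum (s.map c).sum l := by
  have hsum : Jbar.mkQ (s.map x).sum - (s.map c).sum • Jbar.mkQ (diagonalProd l) =
      (s.map fun i => Jbar.mkQ (x i) - c i • Jbar.mkQ (diagonalProd l)).sum := by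
    rw [map_multiset_sum, Multiset.map_map, Multiset.sum_smul, Multiset.map_map,
      ← Multiset.sum_map_sub]
    rfl
  rw [HasLeadingTerm, hsum]
  refine multiset_sum_mem _ fun y hy => ?_
  obtain ⟨i, hi, rfl⟩ := Multiset.mem_map.1 hy
  exact h i hi

theorem HasLeadingTerm.neg_of_add_mem {x y : MvPowerSeries (ℕ × Fin 2) ℂ} {c : ℂ} {l : Multiset ℕ}
    (h : HasLeadingTerm x c l) (hxy : y + x ∈ Jbar) : HasLeadingTerm y (-c) l := by
  have hy : Jbar.mkQ y = -Jbar.mkQ x := by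
    rw [eq_neg_iff_add_eq_zero, ← LinearMap.map_add]
    exact (Quotient.mk_eq_zero _).2 hxy
  rw [HasLeadingTerm, hy, neg_smul, neg_sub_neg, ← neg_sub]
  exact neg_mem h

/-- The partition formed by the nonzero first coordinates of the parts of `s`. -/
def firstParts (s : Multiset (ℕ × ℕ)) : Multiset ℕ := (s.map Prod.fst).filter (· ≠ 0)

theorem firstParts_cons_of_eq_zero {v : ℕ × ℕ} (hv : v.1 = 0) (s : Multiset (ℕ × ℕ)) :
    firstParts (v ::ₘ s) = firstParts s := by
  simp [firstParts, hv]

theorem firstParts_merge {u v : ℕ × ℕ} {s : Multiset (ℕ × ℕ)} (hv : v.1 = 0) (hu : u ∈ s) :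
    firstParts ((u + v) ::ₘ s.erase u) = firstParts s := by
  conv_rhs => rw [← Multiset.cons_erase hu]
  simp [firstParts, hv]

theorem countP_merge {u v : ℕ × ℕ} {s : Multiset (ℕ × ℕ)} (hv : v.1 = 0) (hu : u ∈ s) :
    countP (·.1 = 0) ((u + v) ::ₘ s.erase u) = countP (·.1 = 0) s := by
  conv_rhs => rw [← Multiset.cons_erase hu]
  simp [countP_cons, hv]

/-- The condition satisfied by `bip l` and preserved by suitable merges of a part `(0,1)` into
another part; it forces all parts to be diagonal once no part `(0,1)` is left. -/
structure IsBalanced (s : Multiset (ℕ × ℕ)) : Prop where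
  snd_le_fst_or : ∀ v ∈ s, v.2 ≤ v.1 ∨ v = (0, 1)
  sum_eq : (s.map Prod.fst).sum = (s.map Prod.snd).sum

theorem isBalanced_bip (l : Multiset ℕ) : IsBalanced (bip l) where
  snd_le_fst_or v hv := by
    simp only [bip, mem_add, Multiset.mem_map, mem_replicate] at hv
    rcases hv with ⟨a, -, rfl⟩ | ⟨-, rfl⟩ <;> simp
  sum_eq := by simp [bip]

theorem IsBalanced.fst_eq_snd {s : Multiset (ℕ × ℕ)} (h : IsBalanced s)
    (hs : ∀ v ∈ s, v.1 ≠ 0) : ∀ v ∈ s, v.1 = v.2 := by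
  have hle : ∀ v ∈ s, v.2 ≤ v.1 := fun v hv =>
    (h.snd_le_fst_or v hv).resolve_right fun h01 => hs v hv (by rw [h01])
  by_contra! hne
  obtain ⟨v, hv, hlt⟩ := hne
  exact (Multiset.sum_lt_sum hle ⟨v, hv, (hle v hv).lt_of_ne hlt.symm⟩).ne h.sum_eq.symm

theorem IsBalanced.exists_merge {v : ℕ × ℕ} {s : Multiset (ℕ × ℕ)} (h : IsBalanced (v ::ₘ s))
    (hv : v ≠ 0) (hv1 : v.1 = 0) : ∃ u ∈ s, IsBalanced ((u + v) ::ₘ s.erase u) := by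
  obtain rfl : v = (0, 1) := by
    refine (h.snd_le_fst_or v (mem_cons_self v s)).resolve_left fun hle => hv (Prod.ext hv1 ?_)
    exact Nat.le_zero.1 (hle.trans hv1.le)
  have hsum := h.sum_eq
  simp only [map_cons, sum_cons, zero_add] at hsum
  obtain ⟨u, hu, hlt⟩ : ∃ u ∈ s, u.2 < u.1 := by
    by_contra! hle
    have := Multiset.sum_map_le_sum_map _ _ hle
    omega
  refine ⟨u, hu, ⟨?_, ?_⟩⟩
  · intro w hw
    rcases Multiset.mem_cons.1 hw with rfl | hw
    · exact .inl hlt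
    · exact h.snd_le_fst_or w (mem_cons_of_mem (mem_of_mem_erase hw))
  · rw [← Multiset.cons_erase hu] at hsum
    simp only [map_cons, sum_cons, Prod.fst_add, Prod.snd_add] at hsum ⊢
    omega

theorem hasLeadingTerm_augmented_of_fst_ne_zero {s : Multiset (ℕ × ℕ)}
    (hs : s ∈ partitions (ℕ × ℕ)) (hfst : ∀ v ∈ s, v.1 ≠ 0) :
    ∃ c : ℕ, HasLeadingTerm (augmented s) c (firstParts s) ∧ (IsBalanced s → c ≠ 0) := by
  have hfirst : firstParts s = s.map Prod.fst := Multiset.filter_eq_self.2 (by simpa using hfst)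
  have hlow := neg_mem (mkQ_mem_span_diagonalProd (powerSumProd_sub_augmented_mem_span hs))
  rw [map_sub, neg_sub] at hlow
  by_cases hdiag : ∀ v ∈ s, v.1 = v.2
  · refine ⟨1, ?_, fun _ => one_ne_zero⟩
    rw [HasLeadingTerm, Nat.cast_one, one_smul, hfirst, card_map,
      ← powerSumProd_eq_diagonalProd hdiag]
    exact hlow
  · refine ⟨0, ?_, fun h => absurd (h.fst_eq_snd hfst) hdiag⟩
    push Not at hdiag
    rw [mkQ_apply _ (powerSumProd s), (Quotient.mk_eq_zero _).2 (powerSumProd_mem_Jbar hs hdiag)]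
      at hlow
    rwa [HasLeadingTerm, Nat.cast_zero, zero_smul, hfirst, card_map]

-- `p_v m_N ∈ Jbar`, so modulo `Jbar` the part `v` can only be merged into the parts of `N`.
theorem HasLeadingTerm.augmented_cons {v : ℕ × ℕ} (hv : v.1 ≠ v.2) {N : Multiset (ℕ × ℕ)}
    (hN : N ∈ partitions (ℕ × ℕ)) {c : ℕ × ℕ → ℂ} {l : Multiset ℕ}
    (h : ∀ u ∈ N, HasLeadingTerm (augmented ((u + v) ::ₘ N.erase u)) (c u) l) :
    HasLeadingTerm (augmented (v ::ₘ N)) (-(N.map c).sum) l := by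
  refine (HasLeadingTerm.multiset_sum h).neg_of_add_mem ?_
  have hv0 : v ≠ 0 := by
    rintro rfl
    exact hv rfl
  rw [← mm_singleton_mul_augmented hv0 hN, augmented, mul_smul_comm]
  exact smul_mem _ _ (subset_span ⟨v.1, v.2, N, hv, hN, rfl⟩)

theorem exists_hasLeadingTerm_augmented {k : ℕ} {s : Multiset (ℕ × ℕ)}
    (hs : s ∈ partitions (ℕ × ℕ)) (hk : countP (·.1 = 0) s = k) :
    ∃ c : ℕ, HasLeadingTerm (augmented s) ((-1) ^ k * c) (firstParts s) ∧
      (IsBalanced s → c ≠ 0) := by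
  induction k generalizing s with
  | zero => simpa using hasLeadingTerm_augmented_of_fst_ne_zero hs (countP_eq_zero.1 hk)
  | succ k ih =>
    obtain ⟨v, hvs, hv1⟩ : ∃ v ∈ s, v.1 = 0 := countP_pos.1 (by omega)
    obtain ⟨N, rfl⟩ := Multiset.exists_cons_of_mem hvs
    obtain ⟨hv, hN⟩ := cons_mem_partitions.1 hs
    have hkN : countP (·.1 = 0) N = k := by simpa [countP_cons, hv1] using hk
    have hmerge : ∀ u ∈ N, ∃ c : ℕ,
        HasLeadingTerm (augmented ((u + v) ::ₘ N.erase u)) ((-1) ^ k * c) (firstParts N) ∧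
          (IsBalanced ((u + v) ::ₘ N.erase u) → c ≠ 0) := by
      intro u hu
      rw [← firstParts_merge hv1 hu]
      exact ih (cons_mem_partitions.2
        ⟨fun h => hv (add_eq_zero.1 h).2, erase_mem_partitions hN u⟩)
        ((countP_merge hv1 hu).trans hkN)
    choose! c hc using hmerge
    refine ⟨(N.map c).sum, ?_, fun hbal => ?_⟩
    · have hne : v.1 ≠ v.2 := fun h => hv (Prod.ext hv1 (h.symm.trans hv1))
      have hlead := HasLeadingTerm.augmented_cons hne hN fun u hu => (hc u hu).1
      have hcoeff : (-1 : ℂ) ^ (k + 1) * ((N.map c).sum : ℕ) =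
          -(N.map fun u => (-1) ^ k * (c u : ℂ)).sum := by
        rw [Multiset.sum_map_mul_left, Nat.cast_multiset_sum, Multiset.map_map, pow_succ]
        simp only [mul_neg, mul_one, neg_mul, Function.comp_def]
      rwa [firstParts_cons_of_eq_zero hv1, hcoeff]
    · obtain ⟨u, hu, hbal'⟩ := hbal.exists_merge hv hv1
      exact ((Nat.pos_of_ne_zero ((hc u hu).2 hbal')).trans_le
        (Multiset.single_le_sum (by simp) _ (mem_map_of_mem c hu))).ne'

theorem firstParts_bip {l : Multiset ℕ} (hl : l ∈ partitions ℕ) : firstParts (bip l) = l := by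
  have hfst : (bip l).map Prod.fst = l + replicate l.sum 0 := by simp [bip]
  have hl0 : ∀ a ∈ l, a ≠ 0 := fun a ha h => hl (h ▸ ha)
  have hzeros : ∀ a ∈ replicate l.sum 0, ¬a ≠ 0 := fun a ha => not_not.2 (eq_of_mem_replicate ha)
  rw [firstParts, hfst, filter_add, filter_eq_self.2 hl0, filter_eq_nil.2 hzeros, add_zero]

theorem bip_mem_partitions {l : Multiset ℕ} (hl : l ∈ partitions ℕ) :
    bip l ∈ partitions (ℕ × ℕ) := by
  intro h0
  rcases mem_add.1 h0 with h | h
  · obtain ⟨a, ha, ha0⟩ := Multiset.mem_map.1 h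
    exact hl ((Prod.mk.inj ha0).1 ▸ ha)
  · cases eq_of_mem_replicate h

theorem isTriangularOn_mkQ_mm_bip :
    IsTriangularOn ℂ card (partitions ℕ) (Jbar.mkQ ∘ diagonalProd) (Jbar.mkQ ∘ mm ∘ bip) := by
  intro l hl
  obtain ⟨c, hlead, hc⟩ := exists_hasLeadingTerm_augmented (bip_mem_partitions hl) rfl
  rw [HasLeadingTerm, firstParts_bip hl] at hlead
  have haut : (symmetryFactor (bip l) : ℂ) ≠ 0 := Nat.cast_ne_zero.2 (symmetryFactor_ne_zero _)
  have hc' : (c : ℂ) ≠ 0 := Nat.cast_ne_zero.2 (hc (isBalanced_bip l))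
  refine ⟨(symmetryFactor (bip l) : ℂ)⁻¹ * ((-1) ^ countP (·.1 = 0) (bip l) * c), ?_, ?_⟩
  · exact mul_ne_zero (inv_ne_zero haut)
      (mul_ne_zero (pow_ne_zero _ (neg_ne_zero.2 one_ne_zero)) hc')
  · have := smul_mem _ (symmetryFactor (bip l) : ℂ)⁻¹ hlead
    rwa [smul_sub, augmented, map_smul, inv_smul_smul₀ haut, smul_smul] at this

end LeadingTerm

end MacMahon

/-- In `S̄ = S/(m_{(a,b)} : a ≠ b)`, the images of the `m_{(λ,0)(0,1)^{|λ|}}`, `λ` a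
partition, form a `ℂ`-basis: every `m_Λ` lies in their span modulo the ideal, and they
are linearly independent modulo the ideal. -/
theorem stmt6 :
    (∀ Λ : Multiset (ℕ × ℕ), (0, 0) ∉ Λ →
      mm Λ ∈ Submodule.span ℂ {x | ∃ l : Multiset ℕ, (0 : ℕ) ∉ l ∧ x = mm (bip l)} ⊔ Jbar) ∧
    (∀ (s : Finset (Multiset ℕ)) (c : Multiset ℕ → ℂ), (∀ l ∈ s, (0 : ℕ) ∉ l) →
      (∑ l ∈ s, c l • mm (bip l)) ∈ Jbar → ∀ l ∈ s, c l = 0) := by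
  constructor
  · intro Λ hΛ
    have hset : {x | ∃ l : Multiset ℕ, (0 : ℕ) ∉ l ∧ x = mm (bip l)} =
        (mm ∘ bip) '' MacMahon.partitions ℕ := by
      ext x
      simp [MacMahon.partitions, eq_comm]
    have hmem : Jbar.mkQ (mm Λ) ∈
        Submodule.span ℂ (Jbar.mkQ ∘ mm ∘ bip '' MacMahon.partitions ℕ) := by
      rw [MacMahon.isTriangularOn_mkQ_mm_bip.span_eq]
      exact Submodule.span_mono (Set.image_mono fun _ h => h.1) (MacMahon.mkQ_mem_span_diagonalProd
        (Submodule.subset_span ⟨Λ, ⟨hΛ, Nat.lt_succ_self _⟩, rfl⟩))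
    rwa [Set.image_comp, ← Submodule.map_span, ← Submodule.mem_comap, Submodule.comap_map_mkQ,
      sup_comm, ← hset] at hmem
  · intro s c hs hsum
    have hindep := MacMahon.isTriangularOn_mkQ_mm_bip.linearIndepOn
      MacMahon.linearIndepOn_mkQ_diagonalProd
    refine linearIndepOn_iff'.1 hindep s c hs ?_
    rw [← Submodule.Quotient.mk_eq_zero, ← Submodule.mkQ_apply] at hsum
    simpa only [map_sum, map_smul, Function.comp_apply] using hsum
end

section
/- In S̄ = S/(m_{(a,b)} : a ≠ b), for k > 0 and a partition λ = (1^{α₁}2^{α₂}...): m̄_{(k,k)} · m̄_{(λ,0)(0,1)^{|λ|}} = Σ_{μ⪯λ, ℓ(λ)−ℓ(μ)≤k+1} [ (−1)^k k! (k+|λ|−|μ|+1)(β_{|λ|−|μ|+k}+1) / ( (k−ℓ(λ)+ℓ(μ)+1)! ∏ᵢ (αᵢ−βᵢ)! ) ] · m̄_{(|λ|−|μ|+k,0)(μ,0)(0,1)^{|λ|+k}}, where μ = (1^{β₁}2^{β₂}...). -/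
/- Multiplying an augmented monomial function `M_Λ` by `m_v` either adjoins `v` as a new part or
merges it into a part of `Λ`; solving for `M_{v ∪ Λ}` expands it as an alternating sum of products
`m_{v + ΣU} M_R` over `Λ = U + R`. For `v = (x,0)` and `Λ = (R,0)(0,1)^N` with `N = x + |R|`, only
the products with a diagonal vector `(j,j)` survive in `S̄`. Expanding every term of the right-hand
side this way, the coefficient of the product in which the parts `A ⊆ λ` have been absorbed into
`(k + |A|, k + |A|)` is an alternating sum of factorials that vanishes unless `A = ∅`. -/

open Finset.HasAntidiagonal (antidiagonal mem_antidiagonal)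
open scoped Nat

section Multiplicities

variable {α : Type*} [DecidableEq α]

/-- `∏ αᵢ!` for a multiset `(1^{α₁}2^{α₂}…)`: the number of permutations of a listing of the
multiset that leave it unchanged. -/
def multFactorial (s : Multiset α) : ℕ := ∏ i ∈ s.toFinset, (s.count i)!

lemma multFactorial_eq_prod {s : Multiset α} {t : Finset α} (h : s.toFinset ⊆ t) :
    multFactorial s = ∏ i ∈ t, (s.count i)! :=
  Finset.prod_subset h fun x _ hx ↦ by
    rw [Multiset.count_eq_zero.2 (mt Multiset.mem_toFinset.2 hx), Nat.factorial_zero]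

lemma prod_factorial_count_sub (s μ : Multiset α) :
    ∏ i ∈ s.toFinset, (s.count i - μ.count i)! = multFactorial (s - μ) := by
  have hsub : (s - μ).toFinset ⊆ s.toFinset :=
    Multiset.toFinset_subset.2 (Multiset.subset_of_le (Multiset.sub_le_self s μ))
  rw [multFactorial_eq_prod hsub]
  simp only [Multiset.count_sub]

lemma multFactorial_ne_zero (s : Multiset α) : multFactorial s ≠ 0 :=
  Finset.prod_ne_zero_iff.2 fun _ _ ↦ Nat.factorial_ne_zero _

lemma multFactorial_cons (a : α) (s : Multiset α) :
    multFactorial (a ::ₘ s) = (s.count a + 1) * multFactorial s := by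
  have ha : a ∈ insert a s.toFinset := Finset.mem_insert_self a _
  rw [multFactorial, Multiset.toFinset_cons, multFactorial_eq_prod (Finset.subset_insert a _),
    ← Finset.mul_prod_erase _ _ ha, ← Finset.mul_prod_erase _ (fun i ↦ (s.count i)!) ha,
    Multiset.count_cons_self, Nat.factorial_succ, mul_assoc]
  congr 2
  refine Finset.prod_congr rfl fun x hx ↦ ?_
  rw [Multiset.count_cons_of_ne (Finset.ne_of_mem_erase hx)]

lemma multFactorial_replicate (n : ℕ) (a : α) : multFactorial (Multiset.replicate n a) = n ! := by
  induction n with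
  | zero => simp [multFactorial]
  | succ n ih => rw [Multiset.replicate_succ, multFactorial_cons, ih, Multiset.count_replicate_self,
      Nat.factorial_succ]

lemma count_mul_multFactorial_erase {a : α} {s : Multiset α} (ha : a ∈ s) :
    s.count a * multFactorial (s.erase a) = multFactorial s := by
  obtain ⟨s, rfl⟩ := Multiset.exists_cons_of_mem ha
  rw [Multiset.erase_cons_head, Multiset.count_cons_self, multFactorial_cons]

lemma count_map_cons (s : Multiset (Multiset α)) (a : α) (μ : Multiset α) :
    (s.map (a ::ₘ ·)).count μ = if a ∈ μ then s.count (μ.erase a) else 0 := by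
  split_ifs with ha
  · conv_lhs => rw [← Multiset.cons_erase ha]
    exact Multiset.count_map_eq_count' _ _ (fun _ _ ↦ (Multiset.cons_inj_right a).1) _
  · refine Multiset.count_eq_zero.2 fun h ↦ ha ?_
    obtain ⟨ν, -, rfl⟩ := Multiset.mem_map.1 h
    exact Multiset.mem_cons_self a ν

lemma count_powerset {s μ : Multiset α} {t : Finset α} (hs : s.toFinset ⊆ t)
    (hμ : μ.toFinset ⊆ t) :
    s.powerset.count μ = ∏ i ∈ t, (s.count i).choose (μ.count i) := by
  induction s using Multiset.induction_on generalizing μ with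
  | empty =>
    rcases eq_or_ne μ 0 with rfl | hne
    · simp
    · obtain ⟨a, ha⟩ := Multiset.exists_mem_of_ne_zero hne
      rw [Finset.prod_eq_zero (hμ (Multiset.mem_toFinset.2 ha))]
      · simpa using hne
      · exact Nat.choose_eq_zero_of_lt (by simpa using Multiset.count_pos.2 ha)
  | cons a s ih =>
    rw [Multiset.toFinset_cons, Finset.insert_subset_iff] at hs
    have hrest : ∏ i ∈ t.erase a, ((a ::ₘ s).count i).choose (μ.count i) =
        ∏ i ∈ t.erase a, (s.count i).choose (μ.count i) :=
      Finset.prod_congr rfl fun i hi ↦ by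
        rw [Multiset.count_cons_of_ne (Finset.ne_of_mem_erase hi)]
    rw [Multiset.powerset_cons, Multiset.count_add, count_map_cons, ih hs.2 hμ,
      ← Finset.mul_prod_erase t _ hs.1, ← Finset.mul_prod_erase t _ hs.1, hrest,
      Multiset.count_cons_self]
    split_ifs with ha
    · obtain ⟨μ, rfl⟩ := Multiset.exists_cons_of_mem ha
      have hrest' : ∏ i ∈ t.erase a, (s.count i).choose (μ.count i) =
          ∏ i ∈ t.erase a, (s.count i).choose ((a ::ₘ μ).count i) :=
        Finset.prod_congr rfl fun i hi ↦ by
          rw [Multiset.count_cons_of_ne (Finset.ne_of_mem_erase hi)]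
      rw [Multiset.erase_cons_head, ih hs.2 ((Multiset.toFinset_subset.2
        (Multiset.subset_cons μ a)).trans hμ), ← Finset.mul_prod_erase t _ hs.1, hrest',
        Multiset.count_cons_self, Nat.choose_succ_succ]
      ring
    · rw [Multiset.count_eq_zero_of_notMem ha, Nat.choose_zero_right, Nat.choose_zero_right,
        add_zero]

lemma count_powerset_mul_multFactorial {s μ : Multiset α} (h : μ ≤ s) :
    s.powerset.count μ * multFactorial μ * multFactorial (s - μ) = multFactorial s := by
  have hμ : μ.toFinset ⊆ s.toFinset := Multiset.toFinset_subset.2 (Multiset.subset_of_le h)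
  rw [count_powerset subset_rfl hμ, multFactorial_eq_prod hμ, ← prod_factorial_count_sub,
    ← Finset.prod_mul_distrib, ← Finset.prod_mul_distrib]
  exact Finset.prod_congr rfl fun i _ ↦
    Nat.choose_mul_factorial_mul_factorial (Multiset.le_iff_count.1 h i)

end Multiplicities

section SplitSum

variable {α E : Type*} [AddCommMonoid E]

/-- The sum of `f U R` over the `2 ^ s.card` ways of distributing the elements of `s` over an
ordered pair of multisets with `U + R = s`; equal elements of `s` are told apart. -/
def splitSum (s : Multiset α) (f : Multiset α → Multiset α → E) : E :=
  (s.antidiagonal.map fun p ↦ f p.1 p.2).sum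

@[simp]
lemma splitSum_zero (f : Multiset α → Multiset α → E) : splitSum 0 f = f 0 0 := by
  simp [splitSum]

lemma splitSum_cons (a : α) (s : Multiset α) (f : Multiset α → Multiset α → E) :
    splitSum (a ::ₘ s) f =
      splitSum s (fun U R ↦ f U (a ::ₘ R)) + splitSum s (fun U R ↦ f (a ::ₘ U) R) := by
  simp [splitSum, Multiset.map_map]

lemma splitSum_congr {s : Multiset α} {f g : Multiset α → Multiset α → E}
    (h : ∀ U R, U + R = s → f U R = g U R) : splitSum s f = splitSum s g :=
  congrArg Multiset.sum <| Multiset.map_congr rfl fun _ hp ↦ h _ _ (Multiset.mem_antidiagonal.1 hp)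

lemma splitSum_fun_add (s : Multiset α) (f g : Multiset α → Multiset α → E) :
    splitSum s (fun U R ↦ f U R + g U R) = splitSum s f + splitSum s g := by
  simp [splitSum]

lemma splitSum_fun_zero (s : Multiset α) : splitSum s (fun _ _ ↦ (0 : E)) = 0 := by
  simp [splitSum]

lemma map_splitSum {F G : Type*} [AddCommMonoid F] [FunLike G E F] [AddMonoidHomClass G E F]
    (g : G) (s : Multiset α) (f : Multiset α → Multiset α → E) :
    g (splitSum s f) = splitSum s fun U R ↦ g (f U R) := by
  simp [splitSum, map_multiset_sum, Multiset.map_map]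

lemma smul_splitSum {K : Type*} [DistribSMul K E] (c : K) (s : Multiset α)
    (f : Multiset α → Multiset α → E) :
    c • splitSum s f = splitSum s fun U R ↦ c • f U R :=
  map_splitSum (DistribSMul.toAddMonoidHom E c) s f

lemma splitSum_smul {K : Type*} [Semiring K] [Module K E] (s : Multiset α)
    (f : Multiset α → Multiset α → K) (x : E) :
    splitSum s f • x = splitSum s fun U R ↦ f U R • x :=
  map_splitSum (LinearMap.toSpanSingleton K E x) s f

lemma splitSum_map {β : Type*} (e : α → β) (s : Multiset α) (f : Multiset β → Multiset β → E) :
    splitSum (s.map e) f = splitSum s fun U R ↦ f (U.map e) (R.map e) := by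
  induction s using Multiset.induction_on generalizing f with
  | empty => simp
  | cons a s ih => simp only [Multiset.map_cons, splitSum_cons, ih]

lemma splitSum_add (s t : Multiset α) (f : Multiset α → Multiset α → E) :
    splitSum (s + t) f =
      splitSum s fun U R ↦ splitSum t fun U' R' ↦ f (U + U') (R + R') := by
  simp [splitSum, Multiset.antidiagonal_add, Multiset.map_bind, Multiset.sum_bind]

lemma splitSum_replicate (n : ℕ) (a : α) (f : Multiset α → Multiset α → E) :
    splitSum (Multiset.replicate n a) f = ∑ p ∈ antidiagonal n,
      n.choose p.1 • f (Multiset.replicate p.1 a) (Multiset.replicate p.2 a) := by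
  induction n generalizing f with
  | zero => simp
  | succ n ih =>
    rw [Multiset.replicate_succ, splitSum_cons, ih, ih, Finset.sum_antidiagonal_choose_succ_nsmul
      (fun i j ↦ f (Multiset.replicate i a) (Multiset.replicate j a))]
    simp only [Multiset.replicate_succ]
    congr 1
    refine Finset.sum_congr rfl fun p hp ↦ ?_
    rw [Nat.choose_symm_of_eq_add (mem_antidiagonal.1 hp).symm]

lemma splitSum_assoc (s : Multiset α) (f : Multiset α → Multiset α → Multiset α → E) :
    (splitSum s fun T R ↦ splitSum R fun U R' ↦ f T U R') =
      splitSum s fun A R' ↦ splitSum A fun T U ↦ f T U R' := by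
  induction s using Multiset.induction_on generalizing f with
  | empty => simp
  | cons a s ih =>
    simp only [splitSum_cons, splitSum_fun_add, ih]
    abel

lemma splitSum_ite_eq_zero [DecidableEq α] (s : Multiset α) (f : Multiset α → Multiset α → E) :
    splitSum s (fun U R ↦ if U = 0 then f U R else 0) = f 0 s := by
  induction s using Multiset.induction_on generalizing f with
  | empty => simp
  | cons a s ih => simp [splitSum_cons, ih fun U R ↦ f U (a ::ₘ R), splitSum_fun_zero]

lemma splitSum_sum_smul {K : Type*} [Semiring K] [Module K E] [DecidableEq α] (s : Multiset α)
    (c : α → K) (f : Multiset α → Multiset α → E) :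
    (splitSum s fun U R ↦ (U.map c).sum • f U R) =
      (s.map fun w ↦ c w • splitSum (s.erase w) fun U R ↦ f (w ::ₘ U) R).sum := by
  induction s using Multiset.induction_on generalizing f with
  | empty => simp
  | cons a s ih =>
    have hsplit : (s.map fun w ↦ c w • splitSum ((a ::ₘ s).erase w) fun U R ↦ f (w ::ₘ U) R) =
        s.map fun w ↦ (c w • splitSum (s.erase w) fun U R ↦ f (w ::ₘ U) (a ::ₘ R)) +
          c w • splitSum (s.erase w) fun U R ↦ f (a ::ₘ w ::ₘ U) R :=
      Multiset.map_congr rfl fun w hw ↦ by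
        simp only [Multiset.erase_cons_tail_of_mem hw, splitSum_cons, smul_add,
          Multiset.cons_swap a w]
    rw [Multiset.map_cons, Multiset.sum_cons, Multiset.erase_cons_head, hsplit,
      Multiset.sum_map_add, ← ih fun U R ↦ f U (a ::ₘ R), ← ih fun U R ↦ f (a ::ₘ U) R,
      splitSum_cons, smul_splitSum]
    simp only [Multiset.map_cons, Multiset.sum_cons, add_smul, splitSum_fun_add]
    abel

/-- `U.card !` counts the linear orders on `U`; a nonempty `U` is split by its first element. -/
lemma splitSum_factorial_smul [DecidableEq α] (s : Multiset α)
    (f : Multiset α → Multiset α → E) :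
    (splitSum s fun U R ↦ U.card ! • f U R) =
      f 0 s + (s.map fun w ↦ splitSum (s.erase w) fun U R ↦ U.card ! • f (w ::ₘ U) R).sum := by
  have hpeel : ∀ U R : Multiset α, U.card ! • f U R =
      (if U = 0 then f U R else 0) + U.card • (U.card - 1)! • f U R := fun U R ↦ by
    rcases eq_or_ne U 0 with rfl | hU
    · simp
    · rw [if_neg hU, zero_add, smul_smul, Nat.mul_factorial_pred (mt Multiset.card_eq_zero.1 hU)]
  have hfirst := splitSum_sum_smul s (fun _ ↦ 1) fun U R ↦ (U.card - 1)! • f U R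
  simp only [Multiset.map_const', Multiset.sum_replicate, smul_eq_mul, mul_one, one_smul,
    Multiset.card_cons, Nat.add_sub_cancel] at hfirst
  rw [← hfirst]
  simp only [hpeel, splitSum_fun_add, splitSum_ite_eq_zero]

lemma splitSum_eq_sum_powerset [DecidableEq α] {K F : Type*} [Field K] [CharZero K]
    [AddCommGroup F] [Module K F] (s : Multiset α) (f : Multiset α → Multiset α → F) :
    splitSum s f = (multFactorial s : K) • ∑ μ ∈ s.powerset.toFinset,
      (multFactorial μ * multFactorial (s - μ) : K)⁻¹ • f (s - μ) μ := by
  rw [splitSum, Multiset.antidiagonal_eq_map_powerset, Multiset.map_map,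
    Finset.sum_multiset_map_count, Finset.smul_sum]
  refine Finset.sum_congr rfl fun μ hμ ↦ ?_
  have hle : μ ≤ s := Multiset.mem_powerset.1 (Multiset.mem_toFinset.1 hμ)
  have hne (t : Multiset α) : (multFactorial t : K) ≠ 0 :=
    Nat.cast_ne_zero.2 (multFactorial_ne_zero t)
  rw [Function.comp_apply, ← Nat.cast_smul_eq_nsmul K, smul_smul,
    ← count_powerset_mul_multFactorial hle, mul_assoc, Nat.cast_mul, Nat.cast_mul,
    mul_inv_cancel_right₀ (mul_ne_zero (hne μ) (hne (s - μ)))]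

end SplitSum

section FactorialSums

lemma descFactorial_succ_div {K : Type*} [Field K] [CharZero K] (k t : ℕ) :
    ((k + 1).descFactorial t / (k + 1) : K) =
      if t ≤ k + 1 then (k ! / (k + 1 - t)! : K) else 0 := by
  split_ifs with ht
  · have hfac : ((k + 1 - t)! * (k + 1).descFactorial t : K) = (k + 1) * k ! := by
      exact_mod_cast Nat.factorial_mul_descFactorial ht
    rw [div_eq_div_iff (Nat.cast_add_one_ne_zero k) (Nat.cast_ne_zero.2 (Nat.factorial_ne_zero _)),
      mul_comm, hfac, mul_comm]
  · rw [Nat.descFactorial_of_lt (not_le.1 ht), Nat.cast_zero, zero_div]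

variable {R α : Type*} [CommRing R]

lemma splitSum_neg_one_pow_mul_factorial (A : Multiset α) {K c s : ℕ} (h : c + 1 = K + s) :
    (splitSum A fun T U ↦ (-1 : R) ^ U.card * (U.card + c)! * K.descFactorial T.card) =
      (-1) ^ A.card * c ! * s.ascFactorial A.card := by
  induction A using Multiset.induction_on generalizing K c s with
  | empty => simp
  | cons a A ih =>
    have hright : (splitSum A fun T U ↦ (-1 : R) ^ (a ::ₘ U).card * ((a ::ₘ U).card + c)! *
        K.descFactorial T.card) =
        -1 * ((-1) ^ A.card * (c + 1)! * (s + 1).ascFactorial A.card) := by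
      rw [← ih (show c + 1 + 1 = K + (s + 1) by omega), ← smul_eq_mul, smul_splitSum]
      refine splitSum_congr fun T U _ ↦ ?_
      rw [Multiset.card_cons, pow_succ, add_right_comm, add_assoc, smul_eq_mul]
      ring
    have hleft : (splitSum A fun T U ↦ (-1 : R) ^ U.card * (U.card + c)! *
        K.descFactorial (a ::ₘ T).card) =
        K * ((-1) ^ A.card * c ! * (s + 1).ascFactorial A.card) := by
      rcases K with _ | K
      · simp [splitSum_fun_zero]
      · rw [← ih (show c + 1 = K + (s + 1) by omega), ← smul_eq_mul, smul_splitSum]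
        refine splitSum_congr fun T U _ ↦ ?_
        rw [Multiset.card_cons, Nat.succ_descFactorial_succ, Nat.cast_mul, smul_eq_mul]
        ring
    have hc : (c : R) + 1 = K + s := by simpa using congrArg (Nat.cast : ℕ → R) h
    have hs : (s : R) * (s + 1).ascFactorial A.card = s.ascFactorial (A.card + 1) := by
      rw [Nat.ascFactorial_succ, ← Nat.succ_ascFactorial, Nat.cast_mul]
    rw [splitSum_cons, hright, hleft, Multiset.card_cons, ← hs, Nat.factorial_succ]
    push_cast
    rw [hc]
    ring

lemma splitSum_neg_one_pow_mul_factorial_mul_sum (A : Multiset ℕ) (hA : A ≠ 0) (k : ℕ) :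
    (splitSum A fun T U ↦ (T.sum : R) *
      ((-1) ^ U.card * (U.card + (k + A.sum))! * (k + 1).descFactorial T.card)) =
      -((k + 1) * ((-1) ^ A.card * (k + A.sum)! * A.sum.ascFactorial A.card)) := by
  obtain ⟨n, hn⟩ := Nat.exists_eq_succ_of_ne_zero (mt Multiset.card_eq_zero.1 hA)
  have hpeel : ∀ a ∈ A, (splitSum (A.erase a) fun T U ↦ (-1 : R) ^ U.card *
      (U.card + (k + A.sum))! * (k + 1).descFactorial (a ::ₘ T).card) =
      (k + 1) * ((-1) ^ n * (k + A.sum)! * (A.sum + 1).ascFactorial n) := fun a ha ↦ by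
    have hcard : (A.erase a).card = n := by rw [Multiset.card_erase_of_mem ha, hn, Nat.pred_succ]
    rw [← hcard, ← splitSum_neg_one_pow_mul_factorial _
      (show k + A.sum + 1 = k + (A.sum + 1) by omega), ← smul_eq_mul, smul_splitSum]
    refine splitSum_congr fun T U _ ↦ ?_
    rw [Multiset.card_cons, Nat.succ_descFactorial_succ, smul_eq_mul]
    push_cast
    ring
  have hsum := splitSum_sum_smul A (Nat.cast : ℕ → R) fun T U ↦
    (-1 : R) ^ U.card * (U.card + (k + A.sum))! * (k + 1).descFactorial T.card
  simp only [← Nat.cast_multiset_sum, smul_eq_mul] at hsum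
  rw [hsum, Multiset.map_congr rfl fun a ha ↦ by rw [hpeel a ha], Multiset.sum_map_mul_right,
    ← Nat.cast_multiset_sum, hn, Nat.succ_eq_add_one, Nat.ascFactorial_succ,
    ← Nat.succ_ascFactorial, Nat.cast_mul, pow_succ]
  ring

lemma splitSum_neg_one_pow_mul_factorial_mul_add_sum (A : Multiset ℕ) (k : ℕ) :
    (splitSum A fun T U ↦ ((k : R) + 1 + T.sum) *
      ((-1) ^ U.card * (U.card + (k + A.sum))! * (k + 1).descFactorial T.card)) =
      if A = 0 then ((k + 1)! : R) else 0 := by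
  split_ifs with hA
  · subst hA
    simp [Nat.factorial_succ]
  · simp only [add_mul _ (Nat.cast _ : R), splitSum_fun_add]
    rw [splitSum_neg_one_pow_mul_factorial_mul_sum A hA k,
      ← splitSum_neg_one_pow_mul_factorial A (show k + A.sum + 1 = k + 1 + A.sum by omega),
      ← smul_eq_mul, smul_splitSum]
    exact add_neg_cancel _

lemma splitSum_descFactorial_mul_choose_mul_factorial (A : Multiset ℕ) (k n : ℕ) :
    (splitSum A fun T U ↦ ((k + 1 + T.sum) * (k + 1).descFactorial T.card : R) *
      (n.choose (k + T.sum + U.sum) * ((U.card + (k + T.sum + U.sum))! *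
        (-1) ^ (U.card + (k + T.sum + U.sum))))) =
      if A = 0 then (n.choose k * ((-1) ^ k * (k + 1)!) : R) else 0 := by
  have hfactor : (splitSum A fun T U ↦ ((k + 1 + T.sum) * (k + 1).descFactorial T.card : R) *
      (n.choose (k + T.sum + U.sum) * ((U.card + (k + T.sum + U.sum))! *
        (-1) ^ (U.card + (k + T.sum + U.sum))))) =
      (n.choose (k + A.sum) * (-1) ^ (k + A.sum) : R) • splitSum A fun T U ↦
        ((k : R) + 1 + T.sum) * ((-1) ^ U.card * (U.card + (k + A.sum))! *
          (k + 1).descFactorial T.card) := by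
    rw [smul_splitSum]
    refine splitSum_congr fun T U hTU ↦ ?_
    rw [add_assoc k, ← Multiset.sum_add, hTU, pow_add, smul_eq_mul]
    ring
  rw [hfactor, splitSum_neg_one_pow_mul_factorial_mul_add_sum]
  split_ifs with hA
  · rw [hA, Multiset.sum_zero, add_zero, smul_eq_mul, mul_assoc]
  · exact smul_zero _

end FactorialSums

section FinsuppValues

variable {σ M : Type*} [AddCommMonoid M]

/-- The multiset of nonzero values of a finitely supported function. -/
def finsuppValues (f : σ →₀ M) : Multiset M := f.support.val.map f

lemma zero_notMem_finsuppValues (f : σ →₀ M) : 0 ∉ finsuppValues f := by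
  simp [finsuppValues]

lemma apply_mem_finsuppValues {f : σ →₀ M} {i : σ} (h : f i ≠ 0) : f i ∈ finsuppValues f :=
  Multiset.mem_map_of_mem f (Finsupp.mem_support_iff.2 h)

lemma finsuppValues_single (i : σ) {v : M} (hv : v ≠ 0) :
    finsuppValues (Finsupp.single i v) = {v} := by
  simp [finsuppValues, Finsupp.support_single i hv]

lemma exists_eq_single_of_finsuppValues_eq {f : σ →₀ M} {v : M} (h : finsuppValues f = {v}) :
    ∃ i, f = Finsupp.single i v := by
  have hcard : f.support.card = 1 := by
    simpa [finsuppValues] using congrArg Multiset.card h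
  obtain ⟨i, hi, hf⟩ := Finsupp.card_support_eq_one.1 hcard
  rw [hf, finsuppValues_single i hi, Multiset.singleton_inj] at h
  exact ⟨i, h ▸ hf⟩

lemma finsuppValues_eq_cons_erase {f : σ →₀ M} {i : σ} (h : f i ≠ 0) :
    finsuppValues f = f i ::ₘ finsuppValues (f.erase i) := by
  classical
  have herase : ∀ j ∈ (f.support.erase i).val, f j = f.erase i j := fun j hj ↦
    (Finsupp.erase_ne (Finset.ne_of_mem_erase hj)).symm
  rw [finsuppValues, finsuppValues, Finsupp.support_erase, ← Multiset.map_congr rfl herase,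
    ← Multiset.map_cons, Finset.erase_val, Multiset.cons_erase (Finsupp.mem_support_iff.2 h)]

variable [DecidableEq M]

lemma count_finsuppValues (f : σ →₀ M) (x : M) :
    (finsuppValues f).count x = {i ∈ f.support | f i = x}.card := by
  simp only [finsuppValues, Multiset.count_map, eq_comm (a := x)]
  rfl

lemma finsuppValues_erase (f : σ →₀ M) (i : σ) :
    finsuppValues (f.erase i) = (finsuppValues f).erase (f i) := by
  by_cases h : f i = 0
  · rw [Finsupp.erase_of_notMem_support (Finsupp.notMem_support_iff.2 h), h,
      Multiset.erase_of_notMem (zero_notMem_finsuppValues f)]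
  · rw [finsuppValues_eq_cons_erase h, Multiset.erase_cons_head]

lemma finsuppValues_single_add {f : σ →₀ M} {i : σ} {v : M} (h : f i + v ≠ 0) :
    finsuppValues (Finsupp.single i v + f) = (f i + v) ::ₘ (finsuppValues f).erase (f i) := by
  have happly : (Finsupp.single i v + f) i = f i + v := by simp [add_comm]
  rw [finsuppValues_eq_cons_erase (happly.trans_ne h), happly, Finsupp.erase_add,
    Finsupp.erase_single, zero_add, finsuppValues_erase]

lemma finsuppValues_eq_iff_single_add {f : σ →₀ M} {i : σ} {v : M} (h : f i + v ≠ 0)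
    {Λ : Multiset M} (hΛ : 0 ∉ Λ) :
    finsuppValues f = Λ ↔ f i ∈ 0 ::ₘ Λ ∧
      finsuppValues (Finsupp.single i v + f) = (f i + v) ::ₘ Λ.erase (f i) := by
  rw [finsuppValues_single_add h, Multiset.cons_inj_right]
  by_cases hi : f i = 0
  · rw [hi, Multiset.erase_of_notMem hΛ, Multiset.erase_of_notMem (zero_notMem_finsuppValues f)]
    simp
  · refine ⟨fun hf ↦ ⟨?_, by rw [hf]⟩, fun ⟨hmem, herase⟩ ↦ ?_⟩
    · exact Multiset.mem_cons_of_mem (hf ▸ apply_mem_finsuppValues hi)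
    · rw [← Multiset.cons_erase (apply_mem_finsuppValues hi), herase,
        Multiset.cons_erase ((Multiset.mem_cons.1 hmem).resolve_left hi)]

end FinsuppValues

section MonomialProducts

open MvPowerSeries (coeff)

/-- Reads an assignment of an exponent pair to each index as a bihomogeneous exponent: the pair
`e i` gives the exponents of `xᵢ` and `yᵢ`. -/
noncomputable def pairExponent : (ℕ →₀ ℕ × ℕ) ≃+ (ℕ × Fin 2 →₀ ℕ) :=
  (Finsupp.curryAddEquiv.trans (Finsupp.mapRange.addEquiv
    ((Finsupp.linearEquivFunOnFinite ℕ ℕ (Fin 2)).trans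
      (LinearEquiv.finTwoArrow ℕ ℕ)).toAddEquiv)).symm

lemma coeff_mm (Λ : Multiset (ℕ × ℕ)) (e : ℕ →₀ ℕ × ℕ) :
    coeff (pairExponent e) (mm Λ) = if finsuppValues e = Λ then 1 else 0 := by
  obtain ⟨d, rfl⟩ := pairExponent.symm.surjective e
  rw [AddEquiv.apply_symm_apply]
  have hsupport : (pairExponent.symm d).support = d.support.image Prod.fst := by
    rw [← Finsupp.support_curry]
    exact Finsupp.support_mapRange_of_injective rfl _ (LinearEquiv.injective _)
  rw [finsuppValues, hsupport]
  rfl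

lemma coeff_mm_singleton_mul {v : ℕ × ℕ} (hv : v ≠ 0) (F : MvPowerSeries (ℕ × Fin 2) ℂ)
    (e : ℕ →₀ ℕ × ℕ) :
    coeff (pairExponent e) (mm {v} * F) =
      ∑ i ∈ e.support with v ≤ e i, coeff (pairExponent (e - Finsupp.single i v)) F := by
  classical
  rw [MvPowerSeries.coeff_mul]
  symm
  refine Finset.sum_of_injOn (fun i ↦ (pairExponent (Finsupp.single i v),
    pairExponent (e - Finsupp.single i v))) ?_ ?_ ?_ ?_
  · intro i _ j _ hij
    exact Finsupp.single_left_injective hv (pairExponent.injective (congrArg Prod.fst hij))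
  · intro i hi
    rw [Finset.mem_coe, mem_antidiagonal, ← map_add,
      add_tsub_cancel_of_le (Finsupp.single_le_iff.2 (Finset.mem_filter.1 hi).2)]
  · rintro ⟨p, q⟩ hpq hnot
    obtain ⟨p, rfl⟩ := pairExponent.surjective p
    obtain ⟨q, rfl⟩ := pairExponent.surjective q
    rw [mem_antidiagonal, ← map_add, pairExponent.injective.eq_iff] at hpq
    rw [coeff_mm, if_neg, zero_mul]
    intro hp
    obtain ⟨i, rfl⟩ := exists_eq_single_of_finsuppValues_eq hp
    refine hnot ⟨i, ?_, ?_⟩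
    · have hle : v ≤ e i := Finsupp.single_le_iff.1 (hpq ▸ le_self_add)
      refine Finset.mem_coe.2 (Finset.mem_filter.2 ⟨Finsupp.mem_support_iff.2 ?_, hle⟩)
      exact fun h0 ↦ hv (le_bot_iff.1 (hle.trans_eq h0))
    · simp only [← hpq, add_tsub_cancel_left]
  · intro i _
    rw [coeff_mm, if_pos (finsuppValues_single i hv), one_mul]

lemma card_filter_finsuppValues_sub_single {v : ℕ × ℕ} (hv : v ≠ 0) {Λ : Multiset (ℕ × ℕ)}
    (hΛ : 0 ∉ Λ) {w : ℕ × ℕ} (hw : w ∈ 0 ::ₘ Λ) (e : ℕ →₀ ℕ × ℕ) :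
    {i ∈ {i ∈ {i ∈ e.support | v ≤ e i} | finsuppValues (e - Finsupp.single i v) = Λ} |
        e i - v = w}.card =
      if finsuppValues e = (w + v) ::ₘ Λ.erase w then (finsuppValues e).count (w + v) else 0 := by
  have hiff (i : ℕ) (hle : v ≤ e i) : finsuppValues (e - Finsupp.single i v) = Λ ↔
      e i - v ∈ 0 ::ₘ Λ ∧ finsuppValues e = (e i - v + v) ::ₘ Λ.erase (e i - v) := by
    have hne : (e - Finsupp.single i v) i + v ≠ 0 := fun h ↦ hv (add_eq_zero.1 h).2
    rw [finsuppValues_eq_iff_single_add hne hΛ, add_tsub_cancel_of_le (Finsupp.single_le_iff.2 hle),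
      Finsupp.tsub_apply, Finsupp.single_eq_same]
  rw [Finset.filter_filter, Finset.filter_filter]
  split_ifs with he
  · rw [count_finsuppValues]
    congr 1
    refine Finset.filter_congr fun i _ ↦ ⟨?_, fun hi ↦ ?_⟩
    · rintro ⟨hle, -, rfl⟩
      exact (tsub_add_cancel_of_le hle).symm
    · have hle : v ≤ e i := hi ▸ le_add_self
      have hsub : e i - v = w := by rw [hi, add_tsub_cancel_right]
      exact ⟨hle, (hiff i hle).2 ⟨hsub ▸ hw, hsub ▸ he⟩, hsub⟩
  · refine Finset.card_eq_zero.2 (Finset.filter_eq_empty_iff.2 fun i _ ↦ ?_)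
    rintro ⟨hle, hval, rfl⟩
    exact he ((hiff i hle).1 hval).2

/-- The factor `v` either becomes a new part (`w = 0`) or is added to a part `w` of `Λ`. -/
lemma mm_singleton_mul_mm {v : ℕ × ℕ} (hv : v ≠ 0) {Λ : Multiset (ℕ × ℕ)} (hΛ : 0 ∉ Λ) :
    mm {v} * mm Λ = ∑ w ∈ (0 ::ₘ Λ).toFinset,
      ((Λ.erase w).count (w + v) + 1) • mm ((w + v) ::ₘ Λ.erase w) := by
  ext d
  obtain ⟨e, rfl⟩ := pairExponent.surjective d
  have hmaps : ∀ i ∈ {i ∈ {i ∈ e.support | v ≤ e i} |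
      finsuppValues (e - Finsupp.single i v) = Λ}, e i - v ∈ (0 ::ₘ Λ).toFinset := fun i hi ↦ by
    have hne : (e - Finsupp.single i v) i + v ≠ 0 := fun h ↦ hv (add_eq_zero.1 h).2
    simpa using ((finsuppValues_eq_iff_single_add hne hΛ).1 (Finset.mem_filter.1 hi).2).1
  rw [coeff_mm_singleton_mul hv, map_sum]
  simp only [coeff_mm, map_nsmul]
  rw [Finset.sum_boole, Finset.card_eq_sum_card_fiberwise hmaps, Nat.cast_sum]
  refine Finset.sum_congr rfl fun w hw ↦ ?_
  rw [card_filter_finsuppValues_sub_single hv hΛ (Multiset.mem_toFinset.1 hw)]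
  split_ifs with he
  · rw [he, Multiset.count_cons_self, nsmul_one]
  · rw [Nat.cast_zero, smul_zero]

/-- The augmented monomial function `∏ αᵢ! · m_Λ`: the sum of the monomials obtained by attaching
distinct indices to the parts of `Λ`, equal parts being told apart. -/
noncomputable def augmentedMM (Λ : Multiset (ℕ × ℕ)) : MvPowerSeries (ℕ × Fin 2) ℂ :=
  multFactorial Λ • mm Λ

lemma mm_singleton_mul_augmentedMM {v : ℕ × ℕ} (hv : v ≠ 0) {Λ : Multiset (ℕ × ℕ)} (hΛ : 0 ∉ Λ) :
    mm {v} * augmentedMM Λ =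
      augmentedMM (v ::ₘ Λ) + (Λ.map fun w ↦ augmentedMM ((w + v) ::ₘ Λ.erase w)).sum := by
  have hcount : ∀ w ∈ (0 ::ₘ Λ).toFinset,
      (0 ::ₘ Λ).count w * multFactorial (Λ.erase w) = multFactorial Λ := fun w hw ↦ by
    rcases eq_or_ne w 0 with rfl | hw0
    · rw [Multiset.count_cons_self, Multiset.count_eq_zero.2 hΛ, Multiset.erase_of_notMem hΛ,
        zero_add, one_mul]
    · rw [Multiset.count_cons_of_ne hw0, count_mul_multFactorial_erase
        ((Multiset.mem_cons.1 (Multiset.mem_toFinset.1 hw)).resolve_left hw0)]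
  have hsum : mm {v} * augmentedMM Λ =
      ((0 ::ₘ Λ).map fun w ↦ augmentedMM ((w + v) ::ₘ Λ.erase w)).sum := by
    rw [augmentedMM, mul_smul_comm, mm_singleton_mul_mm hv hΛ, Finset.smul_sum,
      Finset.sum_multiset_map_count]
    refine Finset.sum_congr rfl fun w hw ↦ ?_
    rw [augmentedMM, multFactorial_cons, smul_smul, smul_smul, ← hcount w hw]
    congr 1
    ring
  rw [hsum, Multiset.map_cons, Multiset.sum_cons, zero_add, Multiset.erase_of_notMem hΛ]

lemma augmentedMM_cons {v : ℕ × ℕ} (hv : v ≠ 0) {Λ : Multiset (ℕ × ℕ)} (hΛ : 0 ∉ Λ) :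
    augmentedMM (v ::ₘ Λ) = splitSum Λ fun U R ↦
      U.card ! • (-1 : ℂ) ^ U.card • (mm {v + U.sum} * augmentedMM R) := by
  induction hn : Λ.card generalizing v Λ with
  | zero =>
    obtain rfl := Multiset.card_eq_zero.1 hn
    simpa using (mm_singleton_mul_augmentedMM hv hΛ).symm
  | succ n ih =>
    have hmerge : ∀ w ∈ Λ, augmentedMM ((w + v) ::ₘ Λ.erase w) =
        (-1 : ℂ) • splitSum (Λ.erase w) fun U R ↦ U.card ! • (-1 : ℂ) ^ (w ::ₘ U).card •
          (mm {v + (w ::ₘ U).sum} * augmentedMM R) := fun w hw ↦ by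
      rw [ih (fun h ↦ hv (add_eq_zero.1 h).2) (mt Multiset.mem_of_mem_erase hΛ)
        (by rw [Multiset.card_erase_of_mem hw, hn, Nat.pred_succ]), smul_splitSum]
      refine splitSum_congr fun U R _ ↦ ?_
      rw [Multiset.card_cons, Multiset.sum_cons, pow_succ, add_comm w v, add_assoc,
        smul_comm (-1 : ℂ), smul_smul (-1 : ℂ), mul_neg_one, neg_one_mul, neg_neg]
    rw [splitSum_factorial_smul, Multiset.sum_zero, add_zero, Multiset.card_zero, pow_zero,
      one_smul, mm_singleton_mul_augmentedMM hv hΛ, Multiset.map_congr rfl hmerge]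
    simp only [neg_one_smul, Multiset.sum_map_neg, neg_add_cancel_right]

end MonomialProducts

section BipartiteOnes

/-- The bipartite partition `(R,0)(0,1)^N`. -/
def bipOnes (R : Multiset ℕ) (N : ℕ) : Multiset (ℕ × ℕ) :=
  R.map (fun i ↦ (i, 0)) + Multiset.replicate N (0, 1)

lemma bipOnes_self_sum (l : Multiset ℕ) : bipOnes l l.sum = bip l := rfl

lemma bipOnes_zero_left (N : ℕ) : bipOnes 0 N = Multiset.replicate N (0, 1) := by simp [bipOnes]

lemma bipOnes_cons (a : ℕ) (R : Multiset ℕ) (N : ℕ) :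
    bipOnes (a ::ₘ R) N = (a, 0) ::ₘ bipOnes R N := by
  rw [bipOnes, Multiset.map_cons, Multiset.cons_add, bipOnes]

lemma card_bipOnes (R : Multiset ℕ) (N : ℕ) : (bipOnes R N).card = R.card + N := by
  simp [bipOnes]

lemma sum_bipOnes (R : Multiset ℕ) (N : ℕ) : (bipOnes R N).sum = (R.sum, N) := by
  induction R using Multiset.induction_on with
  | empty => simp [bipOnes_zero_left]
  | cons a R ih => simp [bipOnes_cons, ih]

lemma zero_notMem_bipOnes {R : Multiset ℕ} (hR : 0 ∉ R) (N : ℕ) : 0 ∉ bipOnes R N := by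
  simp [bipOnes, Multiset.mem_replicate, Prod.ext_iff, hR]

lemma count_bipOnes (a : ℕ) (R : Multiset ℕ) (N : ℕ) : (bipOnes R N).count (a, 0) = R.count a := by
  have hones : (Multiset.replicate N (0, 1)).count (a, 0) = 0 := by
    simp [Multiset.count_replicate]
  rw [bipOnes, Multiset.count_add, hones, add_zero,
    Multiset.count_map_eq_count' (fun i ↦ (i, 0)) R (Prod.mk_left_injective 0)]

lemma multFactorial_bipOnes (R : Multiset ℕ) (N : ℕ) :
    multFactorial (bipOnes R N) = multFactorial R * N ! := by
  induction R using Multiset.induction_on with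
  | empty => rw [bipOnes_zero_left, multFactorial_replicate]; simp [multFactorial]
  | cons a R ih => rw [bipOnes_cons, multFactorial_cons, multFactorial_cons, count_bipOnes, ih,
      mul_assoc]

lemma splitSum_bipOnes {E : Type*} [AddCommMonoid E] (R : Multiset ℕ) (N : ℕ)
    (f : Multiset (ℕ × ℕ) → Multiset (ℕ × ℕ) → E) :
    splitSum (bipOnes R N) f = splitSum R fun U R' ↦
      ∑ p ∈ antidiagonal N, N.choose p.1 • f (bipOnes U p.1) (bipOnes R' p.2) := by
  rw [bipOnes, splitSum_add, splitSum_map]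
  simp only [splitSum_replicate, bipOnes]

end BipartiteOnes

section Quotient

lemma mkQ_mm_mul_augmentedMM_eq_zero {a b : ℕ} (hab : a ≠ b) {Λ : Multiset (ℕ × ℕ)}
    (hΛ : 0 ∉ Λ) : Jbar.mkQ (mm {(a, b)} * augmentedMM Λ) = 0 := by
  have hmem : mm {(a, b)} * mm Λ ∈ Jbar := Submodule.subset_span ⟨a, b, Λ, hab, hΛ, rfl⟩
  rw [Submodule.mkQ_apply, Submodule.Quotient.mk_eq_zero, augmentedMM, mul_smul_comm]
  exact nsmul_mem hmem _

lemma mkQ_augmentedMM_cons_bipOnes {x : ℕ} (hx : 0 < x) {R : Multiset ℕ} (hR : 0 ∉ R) :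
    Jbar.mkQ (augmentedMM ((x, 0) ::ₘ bipOnes R (x + R.sum))) = splitSum R fun U R' ↦
      ((x + R.sum).choose (x + U.sum) * ((U.card + (x + U.sum))! *
        (-1) ^ (U.card + (x + U.sum))) : ℂ) •
          Jbar.mkQ (mm {(x + U.sum, x + U.sum)} * augmentedMM (bip R')) := by
  have hx0 : ((x, 0) : ℕ × ℕ) ≠ 0 := fun h ↦ hx.ne' (congrArg Prod.fst h)
  rw [augmentedMM_cons hx0 (zero_notMem_bipOnes hR _), splitSum_bipOnes, map_splitSum]
  refine splitSum_congr fun U R' hUR ↦ ?_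
  have hR' : 0 ∉ R' := fun h ↦ hR (hUR ▸ Multiset.mem_add.2 (Or.inr h))
  simp only [map_sum, map_nsmul, map_smul, sum_bipOnes, card_bipOnes, Prod.mk_add_mk, zero_add]
  rw [Finset.sum_eq_single (x + U.sum, R'.sum)]
  · rw [bipOnes_self_sum, mul_smul, mul_smul, Nat.cast_smul_eq_nsmul, Nat.cast_smul_eq_nsmul]
  · intro p hp hne
    have hp1 : x + U.sum ≠ p.1 := fun h ↦ hne <| Prod.ext h.symm <| by
      have hsum := congrArg Multiset.sum hUR
      rw [Multiset.sum_add] at hsum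
      have := mem_antidiagonal.1 hp
      omega
    rw [mkQ_mm_mul_augmentedMM_eq_zero hp1 (zero_notMem_bipOnes hR' _), smul_zero, smul_zero,
      smul_zero]
  · refine fun h ↦ absurd (mem_antidiagonal.2 ?_) h
    rw [← hUR, Multiset.sum_add, add_assoc]

lemma splitSum_smul_mkQ_augmentedMM {k : ℕ} (hk : 0 < k) {l : Multiset ℕ} (hl : 0 ∉ l) :
    (splitSum l fun T R ↦ ((k + 1 + T.sum) * (k + 1).descFactorial T.card : ℂ) •
      Jbar.mkQ (augmentedMM ((k + T.sum, 0) ::ₘ bipOnes R (k + l.sum)))) =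
      ((k + l.sum).choose k * ((-1) ^ k * (k + 1)!) : ℂ) •
        Jbar.mkQ (mm {(k, k)} * augmentedMM (bip l)) := by
  let X (A R' : Multiset ℕ) := Jbar.mkQ (mm {(k + A.sum, k + A.sum)} * augmentedMM (bip R'))
  let c (T U : Multiset ℕ) : ℂ := ((k + 1 + T.sum) * (k + 1).descFactorial T.card) *
    ((k + l.sum).choose (k + T.sum + U.sum) * ((U.card + (k + T.sum + U.sum))! *
      (-1) ^ (U.card + (k + T.sum + U.sum))))
  have hexpand : (splitSum l fun T R ↦ ((k + 1 + T.sum) * (k + 1).descFactorial T.card : ℂ) •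
      Jbar.mkQ (augmentedMM ((k + T.sum, 0) ::ₘ bipOnes R (k + l.sum)))) =
      splitSum l fun T R ↦ splitSum R fun U R' ↦ c T U • X (T + U) R' :=
    splitSum_congr fun T R hTR ↦ by
      have hR : 0 ∉ R := fun h ↦ hl (hTR ▸ Multiset.mem_add.2 (Or.inr h))
      rw [← hTR, Multiset.sum_add, ← add_assoc, mkQ_augmentedMM_cons_bipOnes (by omega) hR,
        smul_splitSum]
      simp only [smul_smul, c, X, ← hTR, Multiset.sum_add, add_assoc]
  have hcollect (A R' : Multiset ℕ) : (splitSum A fun T U ↦ c T U • X (T + U) R') =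
      if A = 0 then ((k + l.sum).choose k * ((-1) ^ k * (k + 1)!) : ℂ) • X A R' else 0 := by
    rw [splitSum_congr fun T U hTU ↦ by rw [hTU], ← splitSum_smul,
      splitSum_descFactorial_mul_choose_mul_factorial, ite_smul, zero_smul]
  rw [hexpand, splitSum_assoc]
  simp only [hcollect, splitSum_ite_eq_zero, X, Multiset.sum_zero, add_zero]

lemma augmentedMM_cons_bipOnes (a : ℕ) (R : Multiset ℕ) (N : ℕ) :
    augmentedMM ((a, 0) ::ₘ bipOnes R N) =
      ((R.count a + 1) * (multFactorial R * N !)) • mm ((a, 0) ::ₘ bipOnes R N) := by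
  rw [augmentedMM, multFactorial_cons, count_bipOnes, multFactorial_bipOnes]

lemma splitSum_smul_mkQ_augmentedMM_eq_smul_mm {k : ℕ} (hk : 0 < k) {l : Multiset ℕ} (hl : 0 ∉ l) :
    (splitSum l fun T R ↦ ((k + 1 + T.sum) * (k + 1).descFactorial T.card : ℂ) •
      Jbar.mkQ (augmentedMM ((k + T.sum, 0) ::ₘ bipOnes R (k + l.sum)))) =
      ((-1) ^ k * (k + 1) * (k + l.sum)! * multFactorial l : ℂ) •
        Jbar.mkQ (mm {(k, k)} * mm (bip l)) := by
  have haug : augmentedMM (bip l) = (multFactorial l * l.sum !) • mm (bip l) := by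
    rw [augmentedMM, ← bipOnes_self_sum, multFactorial_bipOnes]
  rw [splitSum_smul_mkQ_augmentedMM hk hl, haug, mul_smul_comm, map_nsmul,
    ← Nat.cast_smul_eq_nsmul ℂ, smul_smul,
    ← Nat.add_choose_mul_factorial_mul_factorial k l.sum, Nat.choose_symm_add, Nat.factorial_succ]
  congr 1
  push_cast
  ring

lemma mkQ_mm_mul_mm_bip {k : ℕ} (hk : 0 < k) {l : Multiset ℕ} (hl : 0 ∉ l) :
    Jbar.mkQ (mm {(k, k)} * mm (bip l)) = ∑ μ ∈ l.powerset.toFinset,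
      ((-1) ^ k * (k + 1 + (l - μ).sum) * (μ.count (k + (l - μ).sum) + 1) *
        ((k + 1).descFactorial (l - μ).card / (k + 1)) / multFactorial (l - μ) : ℂ) •
          Jbar.mkQ (mm ((k + (l - μ).sum, 0) ::ₘ bipOnes μ (k + l.sum))) := by
  have hfac : ((k + l.sum)! : ℂ) ≠ 0 := Nat.cast_ne_zero.2 (Nat.factorial_ne_zero _)
  have hmf (t : Multiset ℕ) : (multFactorial t : ℂ) ≠ 0 :=
    Nat.cast_ne_zero.2 (multFactorial_ne_zero t)
  have hk1 : (k : ℂ) + 1 ≠ 0 := Nat.cast_add_one_ne_zero k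
  have hsign : (-1 : ℂ) ^ k * (-1) ^ k = 1 := by rw [← mul_pow, neg_one_mul, neg_neg, one_pow]
  have hcoef : ((-1) ^ k * (k + 1) * (k + l.sum)! * multFactorial l : ℂ) ≠ 0 :=
    mul_ne_zero (mul_ne_zero (mul_ne_zero (left_ne_zero_of_mul_eq_one hsign) hk1) hfac) (hmf l)
  rw [← smul_right_inj hcoef, ← splitSum_smul_mkQ_augmentedMM_eq_smul_mm hk hl,
    splitSum_eq_sum_powerset (K := ℂ), Finset.smul_sum, Finset.smul_sum]
  refine Finset.sum_congr rfl fun μ _ ↦ ?_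
  rw [augmentedMM_cons_bipOnes, map_nsmul, ← Nat.cast_smul_eq_nsmul ℂ, smul_smul, smul_smul,
    smul_smul, smul_smul]
  congr 1
  have hμ := hmf μ
  have hsub := hmf (l - μ)
  push_cast
  field_simp
  rw [pow_two, hsign, mul_one]

end Quotient

open scoped Classical in
/-- In `S̄`, for `k > 0` and a partition `λ = (1^{α₁}2^{α₂}…)`:
`m̄_{(k,k)} m̄_{(λ,0)(0,1)^{|λ|}} = Σ_{μ⪯λ, ℓ(λ)−ℓ(μ)≤k+1}
((−1)^k k! (k+|λ|−|μ|+1)(β_{|λ|−|μ|+k}+1) / ((k−ℓ(λ)+ℓ(μ)+1)! ∏ᵢ(αᵢ−βᵢ)!))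
m̄_{(|λ|−|μ|+k,0)(μ,0)(0,1)^{|λ|+k}}`, stated as membership of the difference in the
ideal `(m_{(a,b)} : a ≠ b)`. -/
theorem stmt14 (k : ℕ) (hk : 0 < k) (lam : Multiset ℕ) (h0 : (0 : ℕ) ∉ lam) :
    mm {((k : ℕ), (k : ℕ))} * mm (bip lam) -
      ∑ μ ∈ lam.powerset.toFinset,
        (if lam.card ≤ k + 1 + μ.card then
          (((-1 : ℂ) ^ k * (Nat.factorial k : ℂ) *
              ((k : ℂ) + (lam.sum : ℂ) - (μ.sum : ℂ) + 1) *
              ((μ.count (lam.sum - μ.sum + k) : ℂ) + 1)) /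
            ((Nat.factorial (k + 1 + μ.card - lam.card) : ℂ) *
              ∏ i ∈ lam.toFinset, (Nat.factorial (lam.count i - μ.count i) : ℂ))) •
          mm ((lam.sum - μ.sum + k, 0) ::ₘ (μ.map (fun i => (i, 0)) +
              Multiset.replicate (lam.sum + k) ((0 : ℕ), (1 : ℕ))))
        else 0) ∈ Jbar := by
  rw [← Submodule.Quotient.mk_eq_zero, ← Submodule.mkQ_apply, map_sub, sub_eq_zero,
    mkQ_mm_mul_mm_bip hk h0, map_sum]
  refine Finset.sum_congr rfl fun μ hμ ↦ ?_
  obtain ⟨T, rfl⟩ :=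
    Multiset.le_iff_exists_add.1 (Multiset.mem_powerset.1 (Multiset.mem_toFinset.1 hμ))
  have hcard : k + 1 + μ.card - (μ + T).card = k + 1 - T.card := by rw [Multiset.card_add]; omega
  have hle : (μ + T).card ≤ k + 1 + μ.card ↔ T.card ≤ k + 1 := by rw [Multiset.card_add]; omega
  rw [← Nat.cast_prod, prod_factorial_count_sub, hcard, if_congr hle rfl rfl,
    add_tsub_cancel_left, descFactorial_succ_div, Multiset.sum_add, add_tsub_cancel_left,
    add_comm T.sum k, add_comm _ k, Nat.cast_add]
  split_ifs
  · rw [map_smul, ← bipOnes]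
    congr 1
    field_simp
    ring
  · simp only [mul_zero, zero_div, zero_smul, map_zero]
end
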